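/- arXiv:2302.03071 — 9 statements merged into one kernel-verified Lean document; each statement's English description precedes it below -/
import Mathlib

section
/- Let S be a finite nonempty type, V : S → ℝ with V i ≥ 0 for all i, and let Opt ∈ S satisfy V(Opt) = max_{i∈S} V(i). Let λ ∈ [0,1], let A ∈ S satisfy V(A) ≥ λ·V(Opt), let α ∈ [0,1], and let p^f be a distribution on S. Define the distribution p^s by p^s i := α·𝟙[i = A] + (1−α)·p^f i. Then (a) TV(p^s, p^f) ≤ α, and (b) for every distribution q on S with TV(q, p^f) ≤ α one has V(p^s) ≥ min(λ, α·λ + (1−α)²)·V(q). -/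
/-!
Write `M = V Opt`, `F = V(p^f)`, `Q = V(q)` and `c = min (λ, αλ + (1-α)²)`. Linearity gives
`V(p^s) = α V(A) + (1-α) F ≥ αλM + (1-α) F`, while `Q ≤ M` and, since `V` takes values in `[0, M]`,
`Q ≤ F + αM` (`welfare_le_add_tv`). If `F ≥ (1-α) M`, the bound `Q ≤ M` suffices. Otherwise
`Q ≤ F + αM` reduces the claim to `c (F + αM) ≤ αλM + (1-α) F`, which is affine in `F` and holds
at both ends of `[0, (1-α) M]`: at `0` because `c ≤ λ`, at `(1-α) M` because `c ≤ αλ + (1-α)²`.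
-/

/-- Moving at most `α` of probability mass changes the mean of a function with values in `[0, M]`
by at most `α * M`: centring `V` at `M / 2` is free because `p` and `q` have equal mass. -/
lemma welfare_le_add_tv {S : Type*} [Fintype S] (V : S → ℝ) (M α : ℝ)
    (hV : ∀ i, 0 ≤ V i) (hM : ∀ i, V i ≤ M) (hM0 : 0 ≤ M) (p q : S → ℝ)
    (hpq : ∑ i, q i = ∑ i, p i) (h : (1 / 2) * ∑ i, |q i - p i| ≤ α) :
    ∑ i, q i * V i ≤ ∑ i, p i * V i + α * M := by
  have key : ∑ i, (q i - p i) * (V i - M / 2) ≤ ∑ i, |q i - p i| * (M / 2) := by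
    refine Finset.sum_le_sum fun i _ => (le_abs_self _).trans ?_
    rw [abs_mul]
    refine mul_le_mul_of_nonneg_left (abs_le.2 ⟨?_, ?_⟩) (abs_nonneg _)
    · linarith [hV i]
    · linarith [hM i]
  have expand : ∑ i, (q i - p i) * (V i - M / 2)
      = ∑ i, q i * V i - ∑ i, p i * V i - (∑ i, q i - ∑ i, p i) * (M / 2) := by
    rw [← Finset.sum_sub_distrib, ← Finset.sum_sub_distrib, Finset.sum_mul,
      ← Finset.sum_sub_distrib]
    exact Finset.sum_congr rfl fun i _ => by ring
  rw [expand, hpq, ← Finset.sum_mul] at key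
  nlinarith [mul_le_mul_of_nonneg_right h hM0]

lemma welfare_le_max {S : Type*} [Fintype S] (V : S → ℝ) (M : ℝ) (hM : ∀ i, V i ≤ M)
    (q : S → ℝ) (hq0 : ∀ i, 0 ≤ q i) (hq1 : ∑ i, q i = 1) : ∑ i, q i * V i ≤ M :=
  calc ∑ i, q i * V i ≤ ∑ i, q i * M :=
        Finset.sum_le_sum fun i _ => mul_le_mul_of_nonneg_left (hM i) (hq0 i)
    _ = M := by rw [← Finset.sum_mul, hq1, one_mul]

/-- Theorem 2 of the paper (Simple-Mix): the distribution
`p^s i = α·𝟙[i = A] + (1-α)·p^f i` is `α`-fair with respect to `p^f`, and its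
welfare is at least `min(λ, α·λ + (1-α)²)` times the welfare of any `α`-fair
distribution `q`. -/
theorem simple_mix_fair_and_welfare
    {S : Type*} [Fintype S] [DecidableEq S] [Nonempty S]
    (V : S → ℝ) (hV : ∀ i, 0 ≤ V i)
    (Opt : S) (hOpt : ∀ i, V i ≤ V Opt)
    (lam : ℝ) (hlam : lam ∈ Set.Icc (0 : ℝ) 1)
    (A : S) (hA : lam * V Opt ≤ V A)
    (α : ℝ) (hα : α ∈ Set.Icc (0 : ℝ) 1)
    (pf : S → ℝ) (hpf0 : ∀ i, 0 ≤ pf i) (hpf1 : ∑ i, pf i = 1)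
    (ps : S → ℝ)
    (hps : ∀ i, ps i = α * (if i = A then 1 else 0) + (1 - α) * pf i) :
    (1 / 2) * ∑ i, |ps i - pf i| ≤ α ∧
    ∀ q : S → ℝ, (∀ i, 0 ≤ q i) → (∑ i, q i = 1) →
      (1 / 2) * ∑ i, |q i - pf i| ≤ α →
      min lam (α * lam + (1 - α) ^ 2) * (∑ i, q i * V i) ≤ ∑ i, ps i * V i := by
  obtain ⟨hl0, hl1⟩ := hlam
  obtain ⟨ha0, ha1⟩ := hα
  refine ⟨?_, fun q hq0 hq1 hq => ?_⟩
  · have hle : ∑ i, |ps i - pf i| ≤ ∑ i, α * ((if i = A then 1 else 0) + pf i) := by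
      refine Finset.sum_le_sum fun i _ => ?_
      have hdiff : ps i - pf i = α * ((if i = A then 1 else 0) - pf i) := by rw [hps]; ring
      rw [hdiff, abs_mul, abs_of_nonneg ha0]
      refine mul_le_mul_of_nonneg_left (abs_le.2 ?_) ha0
      have := hpf0 i
      split_ifs <;> constructor <;> linarith
    rw [← Finset.mul_sum, Finset.sum_add_distrib, hpf1] at hle
    simp only [Finset.sum_ite_eq', Finset.mem_univ, if_true] at hle
    linarith
  · have hM0 : 0 ≤ V Opt := hV Opt
    have hval : ∑ i, ps i * V i = α * V A + (1 - α) * ∑ i, pf i * V i := by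
      have hterm : ∀ i, ps i * V i
          = (if i = A then α * V i else 0) + (1 - α) * (pf i * V i) := by
        intro i
        rw [hps]
        split_ifs <;> ring
      simp only [hterm, Finset.sum_add_distrib, ← Finset.mul_sum, Finset.sum_ite_eq',
        Finset.mem_univ, if_true]
    have hQM := welfare_le_max V (V Opt) hOpt q hq0 hq1
    have hQF := welfare_le_add_tv V (V Opt) α hV hOpt hM0 pf q (hq1.trans hpf1.symm) hq
    have hF0 : 0 ≤ ∑ i, pf i * V i :=
      Finset.sum_nonneg fun i _ => mul_nonneg (hpf0 i) (hV i)
    have hc0 : 0 ≤ min lam (α * lam + (1 - α) ^ 2) := le_min hl0 (by positivity)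
    have hc1 := min_le_left lam (α * lam + (1 - α) ^ 2)
    have hc2 := min_le_right lam (α * lam + (1 - α) ^ 2)
    rw [hval]
    generalize min lam (α * lam + (1 - α) ^ 2) = c at *
    generalize ∑ i, pf i * V i = F at *
    generalize ∑ i, q i * V i = Q at *
    generalize V Opt = M at *
    have hAα := mul_le_mul_of_nonneg_left hA ha0
    have hcM := mul_le_mul_of_nonneg_right hc2 hM0
    rcases le_total ((1 - α) * M) F with hF | hF
    · have h1 := mul_le_mul_of_nonneg_left hQM hc0
      have h2 := mul_le_mul_of_nonneg_left hF (sub_nonneg.2 ha1)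
      linarith
    · have h1 := mul_le_mul_of_nonneg_left hQF hc0
      -- The sign of the slope `1 - α - c` decides which end of `[0, (1 - α) * M]` is the worst.
      rcases le_total c (1 - α) with hc | hc
      · have h2 := mul_nonneg (sub_nonneg.2 hc) hF0
        have h3 := mul_nonneg (mul_nonneg ha0 hM0) (sub_nonneg.2 hc1)
        linarith
      · have h2 := mul_le_mul_of_nonneg_left hF (sub_nonneg.2 hc)
        linarith
end

section
/- Let M ≥ 0, λ ∈ [0,1], α ∈ [0,1], and let x be a real number with 0 ≤ x ≤ (1−α)·M. Then α·λ·M + (1−α)·x ≥ min(λ, α·λ + (1−α)²)·(α·M + x). -/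
/-- Key real-valued inequality in the proof of Theorem 2 (Simple-Mix):
for `M ≥ 0`, `λ, α ∈ [0,1]`, and `0 ≤ x ≤ (1-α)·M`, we have
`α·λ·M + (1-α)·x ≥ min(λ, α·λ + (1-α)²)·(α·M + x)`. -/
theorem simple_mix_key_inequality
    (M lam α x : ℝ) (hM : 0 ≤ M)
    (hlam : lam ∈ Set.Icc (0 : ℝ) 1) (hα : α ∈ Set.Icc (0 : ℝ) 1)
    (hx0 : 0 ≤ x) (hx1 : x ≤ (1 - α) * M) :
    min lam (α * lam + (1 - α) ^ 2) * (α * M + x) ≤ α * lam * M + (1 - α) * x := by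
  obtain ⟨hα0, hα1⟩ := hα
  have hsum : 0 ≤ α * M + x := by positivity
  rcases le_total lam (1 - α) with h | h
  · refine (mul_le_mul_of_nonneg_right (min_le_left _ _) hsum).trans ?_
    nlinarith [mul_le_mul_of_nonneg_right h hx0]
  · refine (mul_le_mul_of_nonneg_right (min_le_right _ _) hsum).trans ?_
    -- The difference of the two sides factors as `α (λ - (1 - α)) ((1 - α) M - x)`.
    have key : 0 ≤ α * (lam - (1 - α)) * ((1 - α) * M - x) :=
      mul_nonneg (mul_nonneg hα0 (sub_nonneg.2 h)) (sub_nonneg.2 hx1)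
    linarith
end

section
/- Let S be a finite nonempty type, s a positive natural number, α ∈ [0,1], and A ∈ S. Let a : Fin s → S → ℝ satisfy a j i ≥ 0 and ∑_{i∈S} a j i = 1 for every j, and let w : Fin s → ℝ satisfy 0 ≤ w j ≤ 1 for every j and ∑_{j} w j = (1−α)·s. Define p i := α·𝟙[i = A] + (1/s)·∑_{j} a j i · w j and q i := (1/s)·∑_{j} a j i. Then p and q are distributions on S and (1/2)·∑_{i∈S} |p i − q i| ≤ α. -/
/-!
Let `m i = (1/s)·∑ j, a j i * w j`. Since `0 ≤ w j ≤ 1`, pointwise `0 ≤ m ≤ q`, and exchanging sums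
gives `∑ m = 1 - α` and `∑ q = 1`. Hence `p - q = α·𝟙_A - (q - m)` is a difference of two
nonnegative functions of total mass `α`, so its `ℓ¹` norm is at most `2α`.
-/

/-- Deterministic core of Lemma 1 of the paper (α-fairness of ε-Mix):
with `a j` distributions on `S`, weights `w j ∈ [0,1]` summing to `(1-α)·s`,
`p i := α·𝟙[i = A] + (1/s)·∑_j a j i · w j` and `q i := (1/s)·∑_j a j i`,
both `p` and `q` are distributions and `TV(p, q) ≤ α`. -/
theorem eps_mix_fairness_core
    {S : Type*} [Fintype S] [DecidableEq S] [Nonempty S]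
    (s : ℕ) (hs : 0 < s)
    (α : ℝ) (hα : α ∈ Set.Icc (0 : ℝ) 1) (A : S)
    (a : Fin s → S → ℝ) (ha0 : ∀ j i, 0 ≤ a j i) (ha1 : ∀ j, ∑ i, a j i = 1)
    (w : Fin s → ℝ) (hw0 : ∀ j, 0 ≤ w j) (hw1 : ∀ j, w j ≤ 1)
    (hwsum : ∑ j, w j = (1 - α) * (s : ℝ))
    (p q : S → ℝ)
    (hp : ∀ i, p i = α * (if i = A then 1 else 0) + (1 / (s : ℝ)) * ∑ j, a j i * w j)
    (hq : ∀ i, q i = (1 / (s : ℝ)) * ∑ j, a j i) :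
    (∀ i, 0 ≤ p i) ∧ (∑ i, p i = 1) ∧
    (∀ i, 0 ≤ q i) ∧ (∑ i, q i = 1) ∧
    (1 / 2) * ∑ i, |p i - q i| ≤ α := by
  have hs' : (0 : ℝ) < s := by exact_mod_cast hs
  have hm0 : ∀ i, 0 ≤ (1 / (s : ℝ)) * ∑ j, a j i * w j := fun i =>
    mul_nonneg (by positivity) (Finset.sum_nonneg fun j _ => mul_nonneg (ha0 j i) (hw0 j))
  have hmq : ∀ i, (1 / (s : ℝ)) * ∑ j, a j i * w j ≤ q i := fun i => by
    rw [hq]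
    exact mul_le_mul_of_nonneg_left
      (Finset.sum_le_sum fun j _ => mul_le_of_le_one_right (ha0 j i) (hw1 j)) (by positivity)
  have hd0 : ∀ i, 0 ≤ α * (if i = A then (1 : ℝ) else 0) := fun i =>
    mul_nonneg hα.1 (by split_ifs <;> norm_num)
  have hdsum : ∑ i, α * (if i = A then (1 : ℝ) else 0) = α := by simp
  have hmsum : ∑ i, (1 / (s : ℝ)) * ∑ j, a j i * w j = 1 - α := by
    rw [← Finset.mul_sum, Finset.sum_comm]
    simp only [← Finset.sum_mul, ha1, one_mul]
    rw [hwsum]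
    field_simp
  have hqsum : ∑ i, q i = 1 := by
    simp only [hq]
    rw [← Finset.mul_sum, Finset.sum_comm]
    simp only [ha1]
    simp [hs'.ne']
  refine ⟨fun i => ?_, ?_, fun i => (hm0 i).trans (hmq i), hqsum, ?_⟩
  · rw [hp]
    exact add_nonneg (hd0 i) (hm0 i)
  · simp only [hp]
    rw [Finset.sum_add_distrib, hdsum, hmsum]
    ring
  · -- `p - q` is the difference of two nonnegative functions, each of total mass `α`:
    -- the point mass `α·𝟙[i = A]` and the mass `q i - (1/s)·∑ j, a j i * w j` lost to truncation.
    have hle : ∑ i, |p i - q i| ≤ ∑ i, (α * (if i = A then (1 : ℝ) else 0) +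
        (q i - (1 / (s : ℝ)) * ∑ j, a j i * w j)) := by
      refine Finset.sum_le_sum fun i _ => ?_
      have h1 := hd0 i
      have h2 := hmq i
      rw [hp, abs_le]
      constructor <;> linarith
    rw [Finset.sum_add_distrib, Finset.sum_sub_distrib, hdsum, hqsum, hmsum] at hle
    linarith
end

section
/- Let S be a finite nonempty type and V : S → ℝ with V i ≥ 0 for all i. Let α ∈ [0,1), ε ∈ (0,1), and let p^f, p^α, p̃^α be distributions on S such that p^f i = (1−α)·p^α i + α·p̃^α i for all i, and such that V(i) ≤ V(j) whenever p̃^α i > 0 and p^α j > 0. Let s := ⌈8·log(2/ε)/((1−α)·ε²)⌉, and define weights w^α_j := min(1, max(0, (1−α)·s − (j−1))) for j = 1,…,s (so the first ⌊(1−α)s⌋ weights equal 1, one boundary weight is fractional, the rest are 0, and ∑_j w^α_j = (1−α)s). Let Z_1,…,Z_s be i.i.d. S-valued random variables with distribution p^f (i.e., distributed according to the s-fold product measure of p^f), and for each outcome let Y_1 ≥ Y_2 ≥ … ≥ Y_s be the values V(Z_1),…,V(Z_s) sorted in decreasing order. Then E[(1/s)·∑_{j=1}^{s} Y_j · w^α_j]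 ≥ (1−α)·(1−ε)·∑_{i∈S} p^α i · V(i). -/
/-!
Write `β = 1 - α` and `m = β s`. The weighted sum `∑ Y_j w_j` is the maximum of `∑ x_j V(Z_j)` over
all `x` with `0 ≤ x_j ≤ 1` and `∑ x_j ≤ m` (`weighted_sorted_ge`), so any feasible `x` gives a lower
bound. Let `q i = β p^α i / p^f i ∈ [0,1]`, so that `p^f q = β p^α`, let `N = ∑ q(Z_k)`, which has mean
`m`, and take `x_j = q(Z_j) · min(1, m/N)`. Since
`min(1, m/N) ≥ 1 - ε/2 - (N - m)² / (2 ε m²)` (`shrink_bound`), the expectation is at least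
`E[A] (1 - ε/2) - E[A (N - m)²] / (2 ε m²)` with `A = ∑ q(Z_j) V(Z_j)` and `E[A] = m V(p^α)`.
The mixed third moment is computed exactly (`moments`) and is at most `E[A] (m + 1)`; the choice of `s`
gives `ε² m ≥ 5`, hence `m + 1 ≤ ε² m²`, and the total loss is at most `ε E[A]`.
-/

/-- Expectation of `F` under the `n`-fold product of the weights `p`. -/
noncomputable def prodExp {S : Type*} [Fintype S] (p : S → ℝ) (n : ℕ)
    (F : (Fin n → S) → ℝ) : ℝ :=
  ∑ z : Fin n → S, (∏ j, p (z j)) * F z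

section Expectation

variable {S : Type*} [Fintype S] (p : S → ℝ)

lemma prodExp_add (n : ℕ) (F G : (Fin n → S) → ℝ) :
    prodExp p n (fun z => F z + G z) = prodExp p n F + prodExp p n G := by
  simp only [prodExp, mul_add, Finset.sum_add_distrib]

lemma prodExp_mul (n : ℕ) (c : ℝ) (F : (Fin n → S) → ℝ) :
    prodExp p n (fun z => c * F z) = c * prodExp p n F := by
  simp only [prodExp, Finset.mul_sum]
  exact Finset.sum_congr rfl fun z _ => by ring

lemma prodExp_mono (hp : ∀ i, 0 ≤ p i) (n : ℕ) (F G : (Fin n → S) → ℝ)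
    (h : ∀ z, F z ≤ G z) : prodExp p n F ≤ prodExp p n G :=
  Finset.sum_le_sum fun z _ =>
    mul_le_mul_of_nonneg_left (h z) (Finset.prod_nonneg fun j _ => hp (z j))

lemma prodExp_succ (n : ℕ) (F : (Fin (n + 1) → S) → ℝ) :
    prodExp p (n + 1) F = ∑ a, p a * prodExp p n (fun z => F (Fin.cons a z)) := by
  unfold prodExp
  rw [← (Fin.consEquiv (fun _ : Fin (n + 1) => S)).sum_comp, Fintype.sum_prod_type]
  refine Finset.sum_congr rfl fun a _ => ?_
  rw [Finset.mul_sum]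
  refine Finset.sum_congr rfl fun z _ => ?_
  simp [Fin.consEquiv, Fin.prod_univ_succ, mul_assoc]

/-- Moments of the sums `A = ∑ g(z_j)` and `D = ∑ d(z_j)` under a product distribution, when `d` is
centred. The mixed moment `E[A D]` is absent because it enters the recursion only multiplied by
the mean of `d`. -/
lemma moments (hp1 : ∑ i, p i = 1) (g d : S → ℝ) (hd : ∑ i, p i * d i = 0) (n : ℕ) :
    prodExp p n (fun _ => 1) = 1 ∧
    prodExp p n (fun z => ∑ j, d (z j)) = 0 ∧
    prodExp p n (fun z => (∑ j, d (z j)) ^ 2) = n * ∑ i, p i * d i ^ 2 ∧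
    prodExp p n (fun z => ∑ j, g (z j)) = n * ∑ i, p i * g i ∧
    prodExp p n (fun z => (∑ j, g (z j)) * (∑ j, d (z j)) ^ 2) =
      n * (n - 1) * ((∑ i, p i * g i) * ∑ i, p i * d i ^ 2) + n * ∑ i, p i * (g i * d i ^ 2) := by
  induction n with
  | zero => simp [prodExp]
  | succ n ih =>
    obtain ⟨h1, h2, h3, h4, h5⟩ := ih
    have hc (c : ℝ) : prodExp p n (fun _ => c) = c := by
      have := prodExp_mul p n c (fun _ => 1)
      simpa [h1] using this
    have e3 (a : S) : prodExp p n (fun z => (d a + ∑ j, d (z j)) ^ 2) =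
        d a ^ 2 + n * ∑ i, p i * d i ^ 2 := by
      have : (fun z : Fin n → S => (d a + ∑ j, d (z j)) ^ 2) =
          fun z => d a ^ 2 + (2 * d a * (∑ j, d (z j)) + (∑ j, d (z j)) ^ 2) := by
        funext z; ring
      rw [this, prodExp_add, prodExp_add, prodExp_mul, hc, h2, h3]; ring
    have e5 (a : S) : prodExp p n (fun z => (g a + ∑ j, g (z j)) * (d a + ∑ j, d (z j)) ^ 2) =
        g a * (d a ^ 2 + n * ∑ i, p i * d i ^ 2) + (d a ^ 2 * (n * ∑ i, p i * g i) +
          (2 * d a * prodExp p n (fun z => (∑ j, g (z j)) * (∑ j, d (z j))) +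
          (n * (n - 1) * ((∑ i, p i * g i) * ∑ i, p i * d i ^ 2)
            + n * ∑ i, p i * (g i * d i ^ 2)))) := by
      have : (fun z : Fin n → S => (g a + ∑ j, g (z j)) * (d a + ∑ j, d (z j)) ^ 2) =
          fun z => g a * (d a + ∑ j, d (z j)) ^ 2 + (d a ^ 2 * (∑ j, g (z j)) +
            (2 * d a * ((∑ j, g (z j)) * (∑ j, d (z j))) +
              (∑ j, g (z j)) * (∑ j, d (z j)) ^ 2)) := by
        funext z; ring
      rw [this, prodExp_add, prodExp_add, prodExp_add, prodExp_mul, prodExp_mul, prodExp_mul,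
        e3, h4, h5]
    -- Averaging over the first coordinate `a` is linear, so constants pull out of `∑ a, p a * _`.
    have hk (c : ℝ) : ∑ a, p a * c = c := by rw [← Finset.sum_mul, hp1, one_mul]
    have hm (f : S → ℝ) (c : ℝ) : ∑ a, p a * (f a * c) = (∑ a, p a * f a) * c := by
      rw [Finset.sum_mul]; exact Finset.sum_congr rfl fun a _ => by ring
    refine ⟨?_, ?_, ?_, ?_, ?_⟩
    · simp [prodExp_succ, h1, hp1]
    · simp only [prodExp_succ, Fin.sum_univ_succ, Fin.cons_zero, Fin.cons_succ, prodExp_add, hc, h2,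
        add_zero, hd]
    · simp only [prodExp_succ, Fin.sum_univ_succ, Fin.cons_zero, Fin.cons_succ, e3]
      simp only [mul_add, Finset.sum_add_distrib, hk]
      push_cast; ring
    · simp only [prodExp_succ, Fin.sum_univ_succ, Fin.cons_zero, Fin.cons_succ, prodExp_add, hc, h4]
      simp only [mul_add, Finset.sum_add_distrib, hk]
      push_cast; ring
    · simp only [prodExp_succ, Fin.sum_univ_succ, Fin.cons_zero, Fin.cons_succ, e5]
      generalize prodExp p n (fun z => (∑ j, g (z j)) * (∑ j, d (z j))) = X
      have h2d : ∑ a, p a * (2 * d a * X) = 0 := by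
        have : ∀ a, p a * (2 * d a * X) = p a * (d a * (2 * X)) := fun a => by ring
        simp only [this, hm, hd, zero_mul]
      have hsplit (a : S) (c : ℝ) : g a * (d a ^ 2 + c) = g a * d a ^ 2 + g a * c := by ring
      simp only [hsplit]
      simp only [mul_add (p _), Finset.sum_add_distrib]
      rw [hk, hk, h2d, hm, hm (fun a => d a ^ 2)]
      push_cast; ring

end Expectation

lemma sum_clipped_weights (m : ℝ) (hm : 0 ≤ m) (n : ℕ) :
    ∑ j : Fin n, min 1 (max 0 (m - ((j : ℕ) : ℝ))) = min (n : ℝ) m := by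
  rw [Fin.sum_univ_eq_sum_range (fun j : ℕ => min 1 (max 0 (m - (j : ℝ))))]
  induction n with
  | zero => simp [hm]
  | succ n ih =>
    rw [Finset.sum_range_succ, ih]
    push_cast
    grind

/-- The greedy weights maximise `∑ y_j x_j` over all `0 ≤ x ≤ 1` of total mass at most `m`, when `y`
is nonnegative and decreasing. -/
lemma weighted_sorted_ge (n : ℕ) (m : ℝ) (hm : 0 ≤ m) (hmn : m ≤ n)
    (y x : Fin n → ℝ) (hy : Antitone y) (hy0 : ∀ j, 0 ≤ y j)
    (hx0 : ∀ j, 0 ≤ x j) (hx1 : ∀ j, x j ≤ 1) (hx : ∑ j, x j ≤ m) :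
    ∑ j, y j * x j ≤ ∑ j, y j * min 1 (max 0 (m - ((j : ℕ) : ℝ))) := by
  have hw := sum_clipped_weights m hm n
  rw [min_eq_right hmn] at hw
  set w : Fin n → ℝ := fun j => min 1 (max 0 (m - ((j : ℕ) : ℝ))) with hwdef
  -- The threshold is the value at the boundary index `⌊m⌋`, or `0` if there is no such index.
  obtain ⟨t, ht0, ht⟩ : ∃ t : ℝ, 0 ≤ t ∧ ∀ j, 0 ≤ (y j - t) * (w j - x j) := by
    have hlow (j : Fin n) (h : (j : ℕ) < ⌊m⌋₊) : w j = 1 := by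
      have h1 : ((j : ℕ) : ℝ) + 1 ≤ m := by
        have := (Nat.le_floor_iff hm).1 (Nat.succ_le_of_lt h)
        exact_mod_cast this
      simp only [hwdef]
      rw [max_eq_right (by linarith), min_eq_left (by linarith)]
    have hhigh (j : Fin n) (h : ⌊m⌋₊ < (j : ℕ)) : w j = 0 := by
      have h1 : m < (j : ℕ) := (Nat.floor_lt hm).1 h
      simp only [hwdef]
      rw [max_eq_left (by linarith), min_eq_right (by norm_num)]
    by_cases hk : ⌊m⌋₊ < n
    · refine ⟨y ⟨⌊m⌋₊, hk⟩, hy0 _, fun j => ?_⟩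
      rcases lt_trichotomy (j : ℕ) ⌊m⌋₊ with h | h | h
      · have h1 : y ⟨⌊m⌋₊, hk⟩ ≤ y j := hy (by rw [Fin.le_def]; exact h.le)
        rw [hlow j h]
        exact mul_nonneg (by linarith) (by linarith [hx1 j])
      · have h1 : j = ⟨⌊m⌋₊, hk⟩ := Fin.ext h
        rw [← h1]; simp
      · have h1 : y j ≤ y ⟨⌊m⌋₊, hk⟩ := hy (by rw [Fin.le_def]; exact h.le)
        rw [hhigh j h]
        exact mul_nonneg_of_nonpos_of_nonpos (by linarith) (by linarith [hx0 j])
    · refine ⟨0, le_rfl, fun j => ?_⟩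
      rw [hlow j (by omega)]
      exact mul_nonneg (by linarith [hy0 j]) (by linarith [hx1 j])
  have hsum : 0 ≤ ∑ j, (y j - t) * (w j - x j) := Finset.sum_nonneg fun j _ => ht j
  have hexp : ∑ j, (y j - t) * (w j - x j) =
      ∑ j, y j * w j - ∑ j, y j * x j - t * (∑ j, w j - ∑ j, x j) := by
    rw [← Finset.sum_sub_distrib, ← Finset.sum_sub_distrib, Finset.mul_sum,
      ← Finset.sum_sub_distrib]
    exact Finset.sum_congr rfl fun j _ => by ring
  have : 0 ≤ t * (∑ j, w j - ∑ j, x j) := mul_nonneg ht0 (by rw [hw]; linarith)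
  linarith

/-- A quadratic lower bound for the factor `min(1, m/N)` that rescales total mass `N` to at most `m`. -/
lemma shrink_bound (m ε N : ℝ) (hm : 0 < m) (hε : 0 < ε) :
    ∃ c : ℝ, 0 ≤ c ∧ c ≤ 1 ∧ c * N ≤ m ∧ 1 - ε / 2 - (N - m) ^ 2 / (2 * ε * m ^ 2) ≤ c := by
  rcases le_or_gt N m with h | h
  · refine ⟨1, by norm_num, le_rfl, by linarith, ?_⟩
    have : 0 ≤ (N - m) ^ 2 / (2 * ε * m ^ 2) := by positivity
    linarith
  · have hN' : 0 < N := hm.trans h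
    refine ⟨m / N, by positivity, (div_le_one hN').2 h.le, by rw [div_mul_cancel₀ _ hN'.ne'], ?_⟩
    have h1 : 1 - (N - m) / m ≤ m / N := by
      have : m / N - (1 - (N - m) / m) = (N - m) ^ 2 / (m * N) := by field_simp; ring
      have h2 : 0 ≤ (N - m) ^ 2 / (m * N) := by positivity
      linarith
    -- The arithmetic-geometric mean inequality for `(N - m) / m`, scaled by `ε`.
    have h2 : ε / 2 + (N - m) ^ 2 / (2 * ε * m ^ 2) - (N - m) / m =
        (ε * m - (N - m)) ^ 2 / (2 * ε * m ^ 2) := by field_simp; ring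
    have h3 : 0 ≤ (ε * m - (N - m)) ^ 2 / (2 * ε * m ^ 2) := by positivity
    linarith

lemma sample_size_bound (β ε : ℝ) (hβ : 0 < β) (hε0 : 0 < ε) (hε1 : ε < 1) (s : ℕ)
    (hs : s = ⌈8 * Real.log (2 / ε) / (β * ε ^ 2)⌉₊) :
    β * s + 1 ≤ ε ^ 2 * (β * s) ^ 2 ∧ 0 < β * s := by
  have hlog : Real.log 2 ≤ Real.log (2 / ε) :=
    Real.log_le_log (by norm_num) (by rw [le_div_iff₀ hε0]; linarith)
  have hl2 := Real.log_two_gt_d9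
  have h1 : 8 * Real.log (2 / ε) / (β * ε ^ 2) ≤ s := by rw [hs]; exact Nat.le_ceil _
  rw [div_le_iff₀ (by positivity)] at h1
  have h5 : 5 ≤ ε ^ 2 * (β * s) := by nlinarith
  have hm0 : 0 ≤ β * s := by positivity
  have hsq : ε ^ 2 ≤ 1 := by nlinarith
  have hm5 : 5 ≤ β * s := by nlinarith
  exact ⟨by nlinarith, by linarith⟩

/-- Claim 1 of the paper: the expected weighted welfare of the top-(1-α)
fraction of an ensemble of `s = ⌈8·log(2/ε)/((1-α)·ε²)⌉` i.i.d. samples from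
the fair prior `p^f = (1-α)·p^α + α·p̃^α` is at least `(1-α)·(1-ε)·V(p^α)`,
where `p̃^α` is supported on values no larger than those in the support
of `p^α`.  The expectation over the `s`-fold product measure of `p^f` is
written as an explicit finite sum over tuples `z : Fin s → S`, with
probability `∏ j, p^f (z j)`; `Y z` denotes the values `V(z 1), …, V(z s)`
sorted in decreasing order. -/
theorem eps_mix_welfare_claim
    {S : Type*} [Fintype S] [DecidableEq S] [Nonempty S]
    (V : S → ℝ) (hV : ∀ i, 0 ≤ V i)
    (α : ℝ) (hα : α ∈ Set.Ico (0 : ℝ) 1)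
    (ε : ℝ) (hε : ε ∈ Set.Ioo (0 : ℝ) 1)
    (pf pa pta : S → ℝ)
    (hpf0 : ∀ i, 0 ≤ pf i) (hpf1 : ∑ i, pf i = 1)
    (hpa0 : ∀ i, 0 ≤ pa i) (hpa1 : ∑ i, pa i = 1)
    (hpta0 : ∀ i, 0 ≤ pta i) (hpta1 : ∑ i, pta i = 1)
    (hdecomp : ∀ i, pf i = (1 - α) * pa i + α * pta i)
    (horder : ∀ i j, 0 < pta i → 0 < pa j → V i ≤ V j)
    (s : ℕ) (hs : s = ⌈8 * Real.log (2 / ε) / ((1 - α) * ε ^ 2)⌉₊)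
    (w : Fin s → ℝ)
    (hw : ∀ j : Fin s, w j = min 1 (max 0 ((1 - α) * (s : ℝ) - ((j : ℕ) : ℝ))))
    (Y : (Fin s → S) → Fin s → ℝ)
    (hY : ∀ z : Fin s → S, Antitone (Y z) ∧
      ∃ σ : Equiv.Perm (Fin s), ∀ j, Y z j = V (z (σ j))) :
    (1 - α) * (1 - ε) * (∑ i, pa i * V i) ≤
      ∑ z : Fin s → S, (∏ j, pf (z j)) * ((1 / (s : ℝ)) * ∑ j, Y z j * w j) := by
  obtain ⟨hα0, hα1⟩ := hα
  obtain ⟨hε0, hε1⟩ := hε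
  obtain ⟨β, hβ⟩ : ∃ β, β = 1 - α := ⟨_, rfl⟩
  rw [← hβ] at hs hdecomp ⊢
  simp only [← hβ] at hw
  have hβ0 : 0 < β := by linarith
  have hβ1 : β ≤ 1 := by linarith
  obtain ⟨hms, hm0⟩ := sample_size_bound β ε hβ0 hε0 hε1 s hs
  have hs0 : (0 : ℝ) < s := by
    rcases Nat.eq_zero_or_pos s with h | h
    · simp [h] at hm0
    · exact_mod_cast h
  clear hs
  -- `q i` is the probability that a sample equal to `i` comes from the component `pa`.
  let q : S → ℝ := fun i => β * pa i / pf i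
  have hle (i : S) : β * pa i ≤ pf i := by
    rw [hdecomp i]; linarith [mul_nonneg hα0 (hpta0 i)]
  have hq0 (i : S) : 0 ≤ q i := div_nonneg (mul_nonneg hβ0.le (hpa0 i)) (hpf0 i)
  have hq1 (i : S) : q i ≤ 1 := div_le_one_of_le₀ (hle i) (hpf0 i)
  have hpq (i : S) : pf i * q i = β * pa i := by
    by_cases h : pf i = 0
    · have h1 := hle i
      have h2 := mul_nonneg hβ0.le (hpa0 i)
      rw [h] at h1 ⊢
      linarith
    · exact mul_div_cancel₀ _ h
  clear_value q
  have hEq : ∑ i, pf i * q i = β := by simp only [hpq, ← Finset.mul_sum, hpa1, mul_one]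
  let g : S → ℝ := fun i => q i * V i
  let d : S → ℝ := fun i => q i - β
  have hd : ∑ i, pf i * d i = 0 := by
    simp only [d, mul_sub, Finset.sum_sub_distrib, hEq, ← Finset.sum_mul, hpf1]; ring
  have hEg : ∑ i, pf i * g i = β * ∑ i, pa i * V i := by
    rw [Finset.mul_sum]
    exact Finset.sum_congr rfl fun i _ => by simp only [g]; rw [← mul_assoc, hpq, mul_assoc]
  have hg0 (i : S) : 0 ≤ g i := mul_nonneg (hq0 i) (hV i)
  have hvar : ∑ i, pf i * d i ^ 2 ≤ β := by
    have h1 : ∑ i, pf i * d i ^ 2 ≤ ∑ i, (pf i * q i - 2 * β * (pf i * q i) + pf i * β ^ 2) := by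
      refine Finset.sum_le_sum fun i _ => ?_
      have : pf i * q i ^ 2 ≤ pf i * q i :=
        mul_le_mul_of_nonneg_left (by nlinarith [hq0 i, hq1 i]) (hpf0 i)
      simp only [d]; nlinarith
    rw [Finset.sum_add_distrib, Finset.sum_sub_distrib, ← Finset.mul_sum, ← Finset.sum_mul, hEq,
      hpf1] at h1
    nlinarith
  have hgd : ∑ i, pf i * (g i * d i ^ 2) ≤ ∑ i, pf i * g i := by
    refine Finset.sum_le_sum fun i _ => mul_le_mul_of_nonneg_left ?_ (hpf0 i)
    have : d i ^ 2 ≤ 1 := by simp only [d]; nlinarith [hq0 i, hq1 i]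
    nlinarith [hg0 i]
  obtain ⟨-, -, -, hA, hT⟩ := moments pf hpf1 g d hd s
  set γ := ∑ i, pf i * g i with hγ
  have hγ0 : 0 ≤ γ := Finset.sum_nonneg fun i _ => mul_nonneg (hpf0 i) (hg0 i)
  set m : ℝ := β * s with hm
  have hs1 : (1 : ℝ) ≤ s := by
    have : 0 < s := by exact_mod_cast hs0
    exact_mod_cast this
  have hTle : prodExp pf s (fun z => (∑ j, g (z j)) * (∑ j, d (z j)) ^ 2) ≤
      s * γ * (ε ^ 2 * m ^ 2) := by
    rw [hT]
    have h1 : (s : ℝ) * (s - 1) * (γ * ∑ i, pf i * d i ^ 2) ≤ s * (s - 1) * (γ * β) :=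
      mul_le_mul_of_nonneg_left (mul_le_mul_of_nonneg_left hvar hγ0)
        (mul_nonneg hs0.le (by linarith))
    have h2 : (s : ℝ) * ∑ i, pf i * (g i * d i ^ 2) ≤ s * γ :=
      mul_le_mul_of_nonneg_left hgd hs0.le
    have h3 : (s : ℝ) * γ * (m + 1) ≤ s * γ * (ε ^ 2 * m ^ 2) :=
      mul_le_mul_of_nonneg_left hms (mul_nonneg hs0.le hγ0)
    have h4 : 0 ≤ (s : ℝ) * γ * β := by positivity
    rw [hm] at h3 ⊢
    nlinarith
  have hpath (z : Fin s → S) :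
      (1 - ε / 2) * (∑ j, g (z j)) +
        (-(1 / (2 * ε * m ^ 2))) * ((∑ j, g (z j)) * (∑ j, d (z j)) ^ 2) ≤ ∑ j, Y z j * w j := by
    obtain ⟨hanti, σ, hσ⟩ := hY z
    obtain ⟨c, hc0, hc1, hcN, hc⟩ := shrink_bound m ε (∑ j, q (z j)) hm0 hε0
    have hD : ∑ j, d (z j) = ∑ j, q (z j) - m := by
      simp only [d, Finset.sum_sub_distrib, Finset.sum_const, Finset.card_univ, Fintype.card_fin,
        nsmul_eq_mul, hm]
      ring
    have hgreedy := weighted_sorted_ge s m hm0.le (by rw [hm]; nlinarith) (Y z)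
      (fun j => c * q (z (σ j))) hanti (fun j => by rw [hσ]; exact hV _)
      (fun j => mul_nonneg hc0 (hq0 _)) (fun j => mul_le_one₀ hc1 (hq0 _) (hq1 _))
      (by rw [← Finset.mul_sum, Equiv.sum_comp σ (fun j => q (z j))]; exact hcN)
    have hL : ∑ j, Y z j * (c * q (z (σ j))) = c * ∑ j, g (z j) := by
      rw [← Equiv.sum_comp σ (fun j => g (z j)), Finset.mul_sum]
      exact Finset.sum_congr rfl fun j _ => by rw [hσ]; simp only [g]; ring
    have hA0 : 0 ≤ ∑ j, g (z j) := Finset.sum_nonneg fun j _ => hg0 _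
    have h1 := mul_le_mul_of_nonneg_right hc hA0
    simp only [hw]
    rw [hD]
    calc _ = (1 - ε / 2 - (∑ j, q (z j) - m) ^ 2 / (2 * ε * m ^ 2)) * ∑ j, g (z j) := by ring
      _ ≤ c * ∑ j, g (z j) := h1
      _ ≤ _ := hL ▸ hgreedy
  have hexp := prodExp_mono pf hpf0 s _ _ hpath
  rw [prodExp_add, prodExp_mul, prodExp_mul, hA] at hexp
  have hloss : 1 / (2 * ε * m ^ 2) *
      prodExp pf s (fun z => (∑ j, g (z j)) * (∑ j, d (z j)) ^ 2) ≤ s * γ * (ε / 2) := by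
    calc _ ≤ 1 / (2 * ε * m ^ 2) * (s * γ * (ε ^ 2 * m ^ 2)) :=
          mul_le_mul_of_nonneg_left hTle (by positivity)
      _ = _ := by field_simp
  have hfin : s * γ * (1 - ε) ≤ prodExp pf s (fun z => ∑ j, Y z j * w j) := by linarith
  have hgoal : ∑ z : Fin s → S, (∏ j, pf (z j)) * ((1 / (s : ℝ)) * ∑ j, Y z j * w j) =
      1 / (s : ℝ) * prodExp pf s (fun z => ∑ j, Y z j * w j) :=
    prodExp_mul pf s _ _
  rw [hgoal, one_div_mul_eq_div, le_div_iff₀ hs0]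
  calc _ = s * (β * ∑ i, pa i * V i) * (1 - ε) := by ring
    _ = s * γ * (1 - ε) := by rw [hEg]
    _ ≤ _ := hfin
end

section
/- Let S be a finite nonempty type, V : S → ℝ with V i ≥ 0 for all i, and Opt ∈ S with V(Opt) = max_{i∈S} V(i). Let λ ∈ [0,1] and A ∈ S with V(A) ≥ λ·V(Opt). Let α ∈ (0,1), ε ∈ (0,1), p^f a distribution on S, and s := ⌈8·log(2/ε)/((1−α)·ε²)⌉. Define weights w^α_j := min(1, max(0, (1−α)·s − (j−1))) for j = 1,…,s. For each tuple z ∈ S^s, let σ_z be the permutation of {1,…,s} sorting the tuple by value, i.e., V(z_{σ_z(1)}) ≥ V(z_{σ_z(2)}) ≥ … ≥ V(z_{σ_z(s)}) (ties broken by index), and define the distribution p^ε on S by p^ε i := α·𝟙[i = A] + E_{Z}[∑_{j=1}^s 𝟙[Z_{σ_Z(j)} = i]·w^α_j]/s, where the expectation is over Z drawn from the s-fold product measure of p^f. Then (a) TV(p^ε, p^f) ≤ α, and (b) for every distribution q on S with TV(q, p^f) ≤ α one has V(p^ε) ≥ λ·(1−ε)·V(q). -/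
/-!
Write `a = 1 - α`, and let `E` be the expectation over i.i.d. samples `z : Fin s → S` of law `pf`.

Fairness: the sampling part `r` of `pε` satisfies `r ≤ pf` pointwise, because dropping the weights
`w ≤ 1` leaves the expected empirical measure, which is `pf`; moreover `∑ r = a`, because
`∑ w = a * s`. Hence `∑ |pε - pf| ≤ α + ∑ (pf - r) = 2 * α`.

Welfare: given an `α`-fair `q`, the overlap `min q pf` has mass at least `a`; rescaling it to mass
exactly `a` and dividing by `pf` gives `g : S → [0, 1]` with `E g = a`, `pf * g ≤ q`, and therefore
`V(q) ≤ α * V(Opt) + C` with `C = ∑ pf * g * V`. The sorted weights `w` maximise the total value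
among all weights in `[0, 1]` of total at most `a * s` (`sum_mul_le_sorted`). Comparing them with
the weights `g (z j)`, scaled down when their sum `G` exceeds `a * s`, gives
`∑ w_j V(z_{σ j}) ≥ (∑ g(z_j) V(z_j)) * (1 - ε/2 - ((G - a s)/(a s))² / (2 ε))`
(`sorted_value_ge`). In the expectation of the quadratic term all the mixed products
vanish by independence, so `E [g(z_j) V(z_j) (G - a s)²] ≤ C * (1 + a s)`
(`iidE_mul_sq_le`), and a second-moment bound already suffices: `a * s * ε² ≥ 2` yields
`E [∑ w_j V(z_{σ j})] ≥ (1 - ε) * s * C`.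
-/

namespace EpsMix

variable {S : Type*} [Fintype S]

/-- Expectation of `F` under `n` i.i.d. samples of law `p`, as a finite sum over sample tuples. -/
noncomputable def iidE (p : S → ℝ) {n : ℕ} (F : (Fin n → S) → ℝ) : ℝ :=
  ∑ z : Fin n → S, (∏ j, p (z j)) * F z

lemma iidE_add (p : S → ℝ) {n : ℕ} (F G : (Fin n → S) → ℝ) :
    iidE p (fun z => F z + G z) = iidE p F + iidE p G := by
  simp [iidE, mul_add, Finset.sum_add_distrib]

lemma iidE_const_mul (p : S → ℝ) {n : ℕ} (c : ℝ) (F : (Fin n → S) → ℝ) :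
    iidE p (fun z => c * F z) = c * iidE p F := by
  simp only [iidE, Finset.mul_sum]
  exact Finset.sum_congr rfl fun z _ => by ring

lemma iidE_sum (p : S → ℝ) {n : ℕ} {ι : Type*} (t : Finset ι) (F : ι → (Fin n → S) → ℝ) :
    iidE p (fun z => ∑ k ∈ t, F k z) = ∑ k ∈ t, iidE p (F k) := by
  simp only [iidE, Finset.mul_sum]
  exact Finset.sum_comm

lemma iidE_mono {p : S → ℝ} (hp : ∀ i, 0 ≤ p i) {n : ℕ} {F G : (Fin n → S) → ℝ}
    (h : ∀ z, F z ≤ G z) : iidE p F ≤ iidE p G :=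
  Finset.sum_le_sum fun z _ =>
    mul_le_mul_of_nonneg_left (h z) (Finset.prod_nonneg fun _ _ => hp _)

/-- Independence: the expectation of a product of functions of the coordinates factorises. -/
lemma iidE_prod (p : S → ℝ) {n : ℕ} (f : Fin n → S → ℝ) :
    iidE p (fun z => ∏ m, f m (z m)) = ∏ m, ∑ i, p i * f m i := by
  classical
  rw [Finset.prod_univ_sum]
  simp [iidE, Finset.prod_mul_distrib, Fintype.piFinset_univ]

lemma iidE_const {p : S → ℝ} (h1 : ∑ i, p i = 1) {n : ℕ} (c : ℝ) :
    iidE p (fun _ : Fin n → S => c) = c := by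
  have h := iidE_prod p (n := n) (fun _ _ => 1)
  have h2 := iidE_const_mul p (n := n) c (fun _ => 1)
  simp only [Finset.prod_const_one, mul_one, h1] at h h2
  rw [h2, h, mul_one]

lemma iidE_three {p : S → ℝ} {n : ℕ} (φ ψ χ : S → ℝ) (j k l : Fin n) :
    iidE p (fun z => φ (z j) * ψ (z k) * χ (z l)) =
      ∏ m, ∑ i, p i * ((if m = j then φ i else 1) * (if m = k then ψ i else 1) *
        (if m = l then χ i else 1)) := by
  rw [← iidE_prod]
  congr 1
  funext z
  simp only [Finset.prod_mul_distrib]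
  simp

lemma iidE_two {p : S → ℝ} (h1 : ∑ i, p i = 1) {n : ℕ} (φ ψ : S → ℝ) {j k : Fin n}
    (hjk : j ≠ k) :
    iidE p (fun z => φ (z j) * ψ (z k)) = (∑ i, p i * φ i) * ∑ i, p i * ψ i := by
  have h := iidE_prod p (n := n)
    (fun m i => (if m = j then φ i else 1) * (if m = k then ψ i else 1))
  have e : ∀ m : Fin n, (∑ i, p i * ((if m = j then φ i else 1) * (if m = k then ψ i else 1))) =
      (if m = j then ∑ i, p i * φ i else 1) * (if m = k then ∑ i, p i * ψ i else 1) := by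
    intro m
    by_cases hj : m = j
    · have hk : m ≠ k := fun h => hjk (hj.symm.trans h)
      simp [hj, hjk]
    · by_cases hk : m = k
      · simp [hk, hjk.symm]
      · simp [hj, hk, h1]
  simp only [e, Finset.prod_mul_distrib] at h
  simpa using h

lemma iidE_one {p : S → ℝ} (h1 : ∑ i, p i = 1) {n : ℕ} (φ : S → ℝ) (j : Fin n) :
    iidE p (fun z => φ (z j)) = ∑ i, p i * φ i := by
  have h := iidE_prod p (n := n) (fun m i => if m = j then φ i else 1)
  have e : ∀ m : Fin n, (∑ i, p i * (if m = j then φ i else 1)) =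
      (if m = j then ∑ i, p i * φ i else 1) := by
    intro m
    by_cases hj : m = j
    · simp [hj]
    · simp [hj, h1]
  simp only [e] at h
  simpa using h

/-- A centred function of the samples contributes to `E [h(z_j) (∑ k, γ(z_k))²]` only through
its diagonal terms; the term `k = j` is bounded by `γ² ≤ 1`, the others factorise. -/
lemma iidE_mul_sq_le {p : S → ℝ} (hp : ∀ i, 0 ≤ p i) (h1 : ∑ i, p i = 1) {n : ℕ}
    (h γ : S → ℝ) (hh : ∀ i, 0 ≤ h i) (hγ0 : ∑ i, p i * γ i = 0) (hγ1 : ∀ i, γ i ^ 2 ≤ 1)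
    (a : ℝ) (ha : 0 ≤ a) (hγ2 : ∑ i, p i * γ i ^ 2 ≤ a) (j : Fin n) :
    iidE p (fun z => h (z j) * (∑ k, γ (z k)) ^ 2) ≤ (∑ i, p i * h i) * (1 + a * n) := by
  have hC : 0 ≤ ∑ i, p i * h i := Finset.sum_nonneg fun i _ => mul_nonneg (hp i) (hh i)
  have e1 : iidE p (fun z => h (z j) * (∑ k, γ (z k)) ^ 2) =
      ∑ k, ∑ l, iidE p (fun z => h (z j) * γ (z k) * γ (z l)) := by
    simp only [← iidE_sum]
    congr 1
    funext z
    rw [sq, Finset.sum_mul_sum, Finset.mul_sum]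
    refine Finset.sum_congr rfl fun k _ => ?_
    rw [Finset.mul_sum]
    exact Finset.sum_congr rfl fun l _ => by ring
  have e2 : ∀ k l : Fin n, k ≠ l → iidE p (fun z => h (z j) * γ (z k) * γ (z l)) = 0 := by
    intro k l hkl
    rw [iidE_three]
    by_cases hk : k = j
    · have hl : l ≠ j := fun h => hkl (hk.trans h.symm)
      exact Finset.prod_eq_zero (Finset.mem_univ l) (by simp [hl, hkl.symm, hγ0])
    · exact Finset.prod_eq_zero (Finset.mem_univ k) (by simp [hk, hkl, hγ0])
  have e3 : ∀ k : Fin n, iidE p (fun z => h (z j) * γ (z k) * γ (z k)) ≤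
      (if k = j then ∑ i, p i * h i else 0) + (∑ i, p i * h i) * a := by
    intro k
    by_cases hk : k = j
    · subst hk
      have : iidE p (fun z => h (z k) * γ (z k) * γ (z k)) ≤ iidE p (fun z => h (z k)) :=
        iidE_mono hp fun z => by nlinarith [hγ1 (z k), hh (z k)]
      rw [iidE_one h1] at this
      simp only [if_true]
      nlinarith
    · have e : iidE p (fun z => h (z j) * γ (z k) * γ (z k)) =
          iidE p (fun z => h (z j) * (fun i => γ i ^ 2) (z k)) := by
        congr 1; funext z; ring
      rw [e, iidE_two h1 h (fun i => γ i ^ 2) (Ne.symm hk)]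
      simp only [hk, if_false, zero_add]
      exact mul_le_mul_of_nonneg_left hγ2 hC
  rw [e1]
  calc ∑ k, ∑ l, iidE p (fun z => h (z j) * γ (z k) * γ (z l))
      = ∑ k, iidE p (fun z => h (z j) * γ (z k) * γ (z k)) :=
        Finset.sum_congr rfl fun k _ =>
          Finset.sum_eq_single k (fun l _ hl => e2 k l hl.symm) (by simp)
    _ ≤ ∑ k : Fin n, ((if k = j then ∑ i, p i * h i else 0) + (∑ i, p i * h i) * a) :=
        Finset.sum_le_sum fun k _ => e3 k
    _ = _ := by
        simp [Finset.sum_add_distrib]; ring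

lemma sum_weights (n : ℕ) (x : ℝ) (hx : 0 ≤ x) :
    ∑ j : Fin n, min 1 (max 0 (x - ((j : ℕ) : ℝ))) = min (n : ℝ) x := by
  rw [Fin.sum_univ_eq_sum_range (fun j => min 1 (max 0 (x - (j : ℝ)))) n]
  induction n with
  | zero => simp [hx]
  | succ n ih =>
    rw [Finset.sum_range_succ, ih]
    push_cast
    rcases le_total x n with h | h
    · rw [min_eq_right h, max_eq_left (by linarith), min_eq_right (by norm_num),
        min_eq_right (by linarith)]
      ring
    · rw [min_eq_left h, max_eq_right (by linarith)]
      rcases le_total 1 (x - n) with h' | h'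
      · rw [min_eq_left h', min_eq_left (by linarith)]
      · rw [min_eq_right h', min_eq_right (by linarith)]
        ring

/-- Greedy weights on a decreasing sequence are optimal among weights in `[0, 1]` of total at
most `x`: with `t` the value at the index `⌊x⌋`, every product `(w_j - u_j) (v_j - t)` is
nonnegative. -/
lemma sum_mul_le_sorted {n : ℕ} (x : ℝ) (hx : 0 ≤ x) (hxn : x < n) (v u : Fin n → ℝ)
    (hv : Antitone v) (hv0 : ∀ j, 0 ≤ v j) (hu0 : ∀ j, 0 ≤ u j) (hu1 : ∀ j, u j ≤ 1)
    (hu : ∑ j, u j ≤ x) :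
    ∑ j, u j * v j ≤ ∑ j : Fin n, min 1 (max 0 (x - ((j : ℕ) : ℝ))) * v j := by
  have hk : ⌊x⌋₊ < n := (Nat.floor_lt hx).2 hxn
  set k : Fin n := ⟨⌊x⌋₊, hk⟩ with hkdef
  have hW := sum_weights n x hx
  rw [min_eq_right hxn.le] at hW
  have key : ∀ j : Fin n,
      0 ≤ (min 1 (max 0 (x - ((j : ℕ) : ℝ))) - u j) * (v j - v k) := by
    intro j
    rcases lt_trichotomy j k with h | h | h
    · have h1 : (j : ℕ) + 1 ≤ ⌊x⌋₊ := h
      have h2 : ((j : ℕ) : ℝ) + 1 ≤ x := by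
        have := (Nat.cast_le (α := ℝ)).2 h1
        push_cast at this
        linarith [Nat.floor_le hx]
      rw [min_eq_left (le_max_of_le_right (by linarith))]
      exact mul_nonneg (by linarith [hu1 j]) (by linarith [hv h.le])
    · simp [h]
    · have h1 : ⌊x⌋₊ + 1 ≤ (j : ℕ) := h
      have h2 : x ≤ ((j : ℕ) : ℝ) := by
        have := (Nat.cast_le (α := ℝ)).2 h1
        push_cast at this
        linarith [Nat.lt_floor_add_one x]
      rw [max_eq_left (by linarith), min_eq_right (by norm_num)]
      exact mul_nonneg_of_nonpos_of_nonpos (by linarith [hu0 j]) (by linarith [hv h.le])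
  have hs := Finset.sum_nonneg fun j (_ : j ∈ Finset.univ) => key j
  have e : ∑ j : Fin n, (min 1 (max 0 (x - ((j : ℕ) : ℝ))) - u j) * (v j - v k) =
      ∑ j : Fin n, min 1 (max 0 (x - ((j : ℕ) : ℝ))) * v j - ∑ j, u j * v j
        - (∑ j : Fin n, min 1 (max 0 (x - ((j : ℕ) : ℝ))) - ∑ j, u j) * v k := by
    rw [sub_mul, Finset.sum_mul, Finset.sum_mul, ← Finset.sum_sub_distrib,
      ← Finset.sum_sub_distrib, ← Finset.sum_sub_distrib]
    exact Finset.sum_congr rfl fun j _ => by ring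
  rw [e, hW] at hs
  nlinarith [mul_nonneg (sub_nonneg.2 hu) (hv0 k)]

/-- Value of the sorted selection against the selection `g`, scaled down to total weight `x`
where its total weight `G` exceeds `x`. The scaling factor is at least `1 - (G - x)/x`, and
`y ≤ ε/2 + y²/(2ε)`. -/
lemma sorted_value_ge {n : ℕ} (x : ℝ) (hx : 0 < x) (hxn : x < n) (v g : Fin n → ℝ)
    (τ : Equiv.Perm (Fin n)) (hv : Antitone fun j => v (τ j)) (hv0 : ∀ j, 0 ≤ v j)
    (hg0 : ∀ j, 0 ≤ g j) (hg1 : ∀ j, g j ≤ 1) (ε : ℝ) (hε : 0 < ε) :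
    (∑ j, g j * v j) * (1 - ε / 2 - (∑ j, g j - x) ^ 2 / (2 * ε * x ^ 2)) ≤
      ∑ j : Fin n, min 1 (max 0 (x - ((j : ℕ) : ℝ))) * v (τ j) := by
  have opt : ∀ r : ℝ, 0 ≤ r → r ≤ 1 → r * ∑ j, g j ≤ x →
      r * ∑ j, g j * v j ≤ ∑ j : Fin n, min 1 (max 0 (x - ((j : ℕ) : ℝ))) * v (τ j) := by
    intro r hr0 hr1 hr
    have h := sum_mul_le_sorted x hx.le hxn (fun j => v (τ j)) (fun j => r * g (τ j)) hv
      (fun j => hv0 _) (fun j => mul_nonneg hr0 (hg0 _))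
      (fun j => mul_le_one₀ hr1 (hg0 _) (hg1 _))
      (by rw [← Finset.mul_sum, Equiv.sum_comp τ g]; exact hr)
    refine le_trans (le_of_eq ?_) h
    rw [Equiv.sum_comp τ (fun j => r * g j * v j), Finset.mul_sum]
    exact Finset.sum_congr rfl fun j _ => by ring
  have hH : 0 ≤ ∑ j, g j * v j := Finset.sum_nonneg fun j _ => mul_nonneg (hg0 j) (hv0 j)
  set G := ∑ j, g j with hG
  have hsq : (G - x) ^ 2 / (2 * ε * x ^ 2) = ((G - x) / x) ^ 2 / (2 * ε) := by
    field_simp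
  have hy : (G - x) / x ≤ ε / 2 + ((G - x) / x) ^ 2 / (2 * ε) := by
    set y := (G - x) / x
    have : ε / 2 + y ^ 2 / (2 * ε) - y = (y - ε) ^ 2 / (2 * ε) := by
      field_simp
      ring
    have h2 : 0 ≤ (y - ε) ^ 2 / (2 * ε) := by positivity
    linarith
  rw [hsq]
  rcases le_or_gt G x with h | h
  · refine le_trans ?_ (opt 1 zero_le_one le_rfl (by linarith))
    rw [mul_comm]
    refine mul_le_mul_of_nonneg_right ?_ hH
    have : 0 ≤ ((G - x) / x) ^ 2 / (2 * ε) := by positivity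
    linarith
  · have hG0 : 0 < G := hx.trans h
    refine le_trans ?_ (opt (x / G) (by positivity) ((div_le_one hG0).2 h.le)
      (by rw [div_mul_cancel₀ _ hG0.ne']))
    rw [mul_comm]
    refine mul_le_mul_of_nonneg_right ?_ hH
    have : x / G - (1 - (G - x) / x) = (G - x) ^ 2 / (G * x) := by
      field_simp
      ring
    have h2 : 0 ≤ (G - x) ^ 2 / (G * x) := by positivity
    linarith

/-- Expected value of the sorted selection against any selection rule `g` of mean `a`. -/
lemma expected_value_ge {p : S → ℝ} (hp : ∀ i, 0 ≤ p i) (h1 : ∑ i, p i = 1) {n : ℕ}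
    (V : S → ℝ) (hV : ∀ i, 0 ≤ V i) (a : ℝ) (ha : 0 < a) (ha1 : a < 1) (ε : ℝ) (hε : 0 < ε)
    (hε1 : ε < 1) (hn : 2 ≤ a * n * ε ^ 2) (σ : (Fin n → S) → Equiv.Perm (Fin n))
    (hσ : ∀ z : Fin n → S, Antitone fun j => V (z (σ z j)))
    (g : S → ℝ) (hg0 : ∀ i, 0 ≤ g i) (hg1 : ∀ i, g i ≤ 1) (hga : ∑ i, p i * g i = a) :
    (1 - ε) * (∑ i, p i * (g i * V i)) * n ≤
      iidE p (fun z : Fin n → S =>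
        ∑ j : Fin n, min 1 (max 0 (a * n - ((j : ℕ) : ℝ))) * V (z (σ z j))) := by
  set C := ∑ i, p i * (g i * V i) with hCdef
  have hC : 0 ≤ C := Finset.sum_nonneg fun i _ => mul_nonneg (hp i) (mul_nonneg (hg0 i) (hV i))
  have hε2 : ε ^ 2 ≤ 1 := by nlinarith
  have hε20 : 0 < ε ^ 2 := by positivity
  have hx : 0 < a * n := by
    by_contra hcon
    nlinarith
  have hx2 : 2 ≤ a * n := by nlinarith
  have hn0 : (0 : ℝ) < n := by
    by_contra hcon
    nlinarith
  have hxn : a * n < n := by nlinarith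
  set x := a * (n : ℝ) with hxdef
  set γ : S → ℝ := fun i => g i - a with hγ
  have hγ0 : ∑ i, p i * γ i = 0 := by
    simp only [hγ, mul_sub, Finset.sum_sub_distrib, ← Finset.sum_mul, hga, h1]
    ring
  have hγ1 : ∀ i, γ i ^ 2 ≤ 1 := fun i => by
    have := hg0 i
    have := hg1 i
    simp only [hγ]
    nlinarith
  have hγ2 : ∑ i, p i * γ i ^ 2 ≤ a := by
    have : ∑ i, p i * γ i ^ 2 ≤ ∑ i, (p i * g i - 2 * a * (p i * g i) + a ^ 2 * p i) := by
      refine Finset.sum_le_sum fun i _ => ?_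
      simp only [hγ]
      have : 0 ≤ p i * (g i * (1 - g i)) :=
        mul_nonneg (hp i) (mul_nonneg (hg0 i) (by linarith [hg1 i]))
      nlinarith
    rw [Finset.sum_add_distrib, Finset.sum_sub_distrib, ← Finset.mul_sum, ← Finset.mul_sum,
      hga, h1] at this
    nlinarith
  have hpt : ∀ z : Fin n → S,
      (1 - ε / 2) * (∑ j, g (z j) * V (z j)) + (-(1 / (2 * ε * x ^ 2))) *
        (∑ j, (g (z j) * V (z j)) * (∑ k, γ (z k)) ^ 2) ≤
      ∑ j : Fin n, min 1 (max 0 (x - ((j : ℕ) : ℝ))) * V (z (σ z j)) := by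
    intro z
    refine le_trans (le_of_eq ?_) (sorted_value_ge x hx hxn (fun j => V (z j))
      (fun j => g (z j)) (σ z) (hσ z) (fun j => hV _) (fun j => hg0 _) (fun j => hg1 _) ε hε)
    have : ∑ k, γ (z k) = ∑ j, g (z j) - x := by
      simp only [hγ, Finset.sum_sub_distrib, hxdef]
      simp [mul_comm]
    rw [this, ← Finset.sum_mul]
    ring
  have hE := iidE_mono hp hpt
  rw [iidE_add, iidE_const_mul, iidE_const_mul, iidE_sum, iidE_sum] at hE
  have hA : ∑ j : Fin n, iidE p (fun z : Fin n → S => g (z j) * V (z j)) = n * C := by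
    rw [Finset.sum_congr rfl fun j _ => iidE_one h1 (fun i => g i * V i) j]
    simp [hCdef]
  have hB : ∑ j : Fin n, iidE p (fun z : Fin n → S =>
      (g (z j) * V (z j)) * (∑ k, γ (z k)) ^ 2) ≤ n * (C * (1 + x)) := by
    refine le_trans (Finset.sum_le_sum fun j _ => iidE_mul_sq_le hp h1 (fun i => g i * V i) γ
      (fun i => mul_nonneg (hg0 i) (hV i)) hγ0 hγ1 a ha.le hγ2 j) ?_
    simp [hCdef, hxdef]
  rw [hA] at hE
  refine le_trans ?_ hE
  have hq : 1 / (2 * ε * x ^ 2) * (∑ j : Fin n, iidE p (fun z : Fin n → S =>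
      (g (z j) * V (z j)) * (∑ k, γ (z k)) ^ 2)) ≤ ε / 2 * (n * C) := by
    refine le_trans (mul_le_mul_of_nonneg_left hB (by positivity)) ?_
    rw [div_mul_eq_mul_div, one_mul, div_le_iff₀ (by positivity)]
    have h3 : 1 + x ≤ ε ^ 2 * x ^ 2 := by nlinarith
    have h4 : 0 ≤ n * C := by positivity
    nlinarith [mul_le_mul_of_nonneg_left h3 h4]
  linarith

/-- The overlap of `q` and `p`, rescaled to mass `a`, as a selection rule `g` relative to `p`. -/
lemma exists_selection {p q : S → ℝ} (hp : ∀ i, 0 ≤ p i) (hp1 : ∑ i, p i = 1)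
    (hq : ∀ i, 0 ≤ q i) (hq1 : ∑ i, q i = 1) (a : ℝ) (ha : 0 < a)
    (hTV : (1 / 2) * ∑ i, |q i - p i| ≤ 1 - a) :
    ∃ g : S → ℝ, (∀ i, 0 ≤ g i) ∧ (∀ i, g i ≤ 1) ∧ ∑ i, p i * g i = a ∧
      ∀ i, p i * g i ≤ q i := by
  set M := ∑ i, min (q i) (p i) with hM
  have hMa : a ≤ M := by
    have : M = ∑ i, ((q i + p i) - |q i - p i|) / 2 :=
      Finset.sum_congr rfl fun i _ => by
        rcases le_total (q i) (p i) with h | h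
        · rw [min_eq_left h, abs_of_nonpos (by linarith)]; ring
        · rw [min_eq_right h, abs_of_nonneg (by linarith)]; ring
    rw [this, ← Finset.sum_div, Finset.sum_sub_distrib, Finset.sum_add_distrib, hq1, hp1]
    linarith
  have hM0 : 0 < M := ha.trans_le hMa
  have hr : a / M ≤ 1 := (div_le_one hM0).2 hMa
  have hr0 : 0 ≤ a / M := by positivity
  have hm0 : ∀ i, 0 ≤ min (q i) (p i) := fun i => le_min (hq i) (hp i)
  have hpg : ∀ i, p i * (min (q i) (p i) * (a / M) / p i) = min (q i) (p i) * (a / M) := by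
    intro i
    rcases (hp i).eq_or_lt with h | h
    · rw [← h, min_eq_right (hq i)]; simp
    · field_simp
  refine ⟨fun i => min (q i) (p i) * (a / M) / p i, fun i => ?_, fun i => ?_, ?_, fun i => ?_⟩
  · exact div_nonneg (mul_nonneg (hm0 i) hr0) (hp i)
  · refine div_le_one_of_le₀ ?_ (hp i)
    nlinarith [hm0 i, min_le_right (q i) (p i)]
  · simp only [hpg]
    rw [← Finset.sum_mul, ← hM]
    field_simp
  · simp only [hpg]
    nlinarith [hm0 i, min_le_left (q i) (p i)]

lemma two_le_sample_size (a ε : ℝ) (ha : 0 < a) (hε : 0 < ε) (hε1 : ε < 1) :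
    2 ≤ a * (⌈8 * Real.log (2 / ε) / (a * ε ^ 2)⌉₊ : ℝ) * ε ^ 2 := by
  have h1 : Real.log 2 ≤ Real.log (2 / ε) :=
    Real.log_le_log (by norm_num) (by rw [le_div_iff₀ hε]; linarith)
  have h2 := Nat.le_ceil (8 * Real.log (2 / ε) / (a * ε ^ 2))
  rw [div_le_iff₀ (by positivity)] at h2
  have := Real.log_two_gt_d9
  nlinarith

end EpsMix

/-- Theorem 1 of the paper (ε-Mix): the output distribution
`p^ε i = α·𝟙[i = A] + E_Z[∑_j 𝟙[Z_{σ_Z(j)} = i]·w^α_j]/s` of the ε-Mix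
algorithm is `α`-fair with respect to the fair prior `p^f`, and its welfare is
at least `λ·(1-ε)` times the welfare of any `α`-fair distribution.  Here the
expectation over the `s`-fold product measure of `p^f` is written as an
explicit finite sum over tuples `z : Fin s → S` with probability
`∏ j, p^f (z j)`, and `σ z` is a permutation sorting the sampled solutions in
decreasing order of value. -/
theorem eps_mix_fair_and_welfare
    {S : Type*} [Fintype S] [DecidableEq S] [Nonempty S]
    (V : S → ℝ) (hV : ∀ i, 0 ≤ V i)
    (Opt : S) (hOpt : ∀ i, V i ≤ V Opt)
    (lam : ℝ) (hlam : lam ∈ Set.Icc (0 : ℝ) 1)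
    (A : S) (hA : lam * V Opt ≤ V A)
    (α : ℝ) (hα : α ∈ Set.Ioo (0 : ℝ) 1)
    (ε : ℝ) (hε : ε ∈ Set.Ioo (0 : ℝ) 1)
    (pf : S → ℝ) (hpf0 : ∀ i, 0 ≤ pf i) (hpf1 : ∑ i, pf i = 1)
    (s : ℕ) (hs : s = ⌈8 * Real.log (2 / ε) / ((1 - α) * ε ^ 2)⌉₊)
    (w : Fin s → ℝ)
    (hw : ∀ j : Fin s, w j = min 1 (max 0 ((1 - α) * (s : ℝ) - ((j : ℕ) : ℝ))))
    (σ : (Fin s → S) → Equiv.Perm (Fin s))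
    (hσ : ∀ z : Fin s → S, Antitone fun j => V (z (σ z j)))
    (pε : S → ℝ)
    (hpε : ∀ i, pε i = α * (if i = A then 1 else 0) +
      (∑ z : Fin s → S, (∏ j, pf (z j)) *
        (∑ j, (if z (σ z j) = i then 1 else 0) * w j)) / (s : ℝ)) :
    (1 / 2) * ∑ i, |pε i - pf i| ≤ α ∧
    ∀ q : S → ℝ, (∀ i, 0 ≤ q i) → (∑ i, q i = 1) →
      (1 / 2) * ∑ i, |q i - pf i| ≤ α →
      lam * (1 - ε) * (∑ i, q i * V i) ≤ ∑ i, pε i * V i := by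
  obtain ⟨hα0, hα1⟩ := hα
  obtain ⟨hε0, hε1⟩ := hε
  obtain ⟨hl0, hl1⟩ := hlam
  have ha : 0 < 1 - α := by linarith
  have hn : 2 ≤ (1 - α) * (s : ℝ) * ε ^ 2 := by
    rw [hs]; exact EpsMix.two_le_sample_size _ _ ha hε0 hε1
  have hs0 : (0 : ℝ) < s := by
    rcases Nat.eq_zero_or_pos s with h | h
    · rw [h] at hn; norm_num at hn
    · exact_mod_cast h
  have hsumw : ∑ j, w j = (1 - α) * s := by
    simp only [hw]
    rw [EpsMix.sum_weights _ _ (by positivity)]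
    exact min_eq_right (by nlinarith)
  have hw1 : ∀ j, w j ≤ 1 := fun j => by rw [hw]; exact min_le_left _ _
  -- `r` is the contribution of the sampling step to the output distribution.
  set r : S → ℝ := fun i => EpsMix.iidE pf (fun z : Fin s → S =>
    ∑ j, (if z (σ z j) = i then (1 : ℝ) else 0) * w j) / s with hr
  have hpr : ∀ i, pε i = α * (if i = A then 1 else 0) + r i := hpε
  have hsumr : ∀ f : S → ℝ, ∑ i, r i * f i =
      EpsMix.iidE pf (fun z : Fin s → S => ∑ j, w j * f (z (σ z j))) / s := by
    intro f
    have : ∀ i, r i * f i = EpsMix.iidE pf (fun z : Fin s → S =>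
        f i * ∑ j, (if z (σ z j) = i then (1 : ℝ) else 0) * w j) / s := by
      intro i
      rw [EpsMix.iidE_const_mul]
      simp only [hr]
      ring
    simp only [this]
    rw [← Finset.sum_div, ← EpsMix.iidE_sum]
    congr 2
    funext z
    simp only [Finset.mul_sum]
    rw [Finset.sum_comm]
    refine Finset.sum_congr rfl fun j _ => ?_
    rw [Finset.sum_eq_single (z (σ z j))]
    · simp [mul_comm]
    · intro i _ hi
      simp [hi.symm]
    · simp
  constructor
  · have hrle : ∀ i, r i ≤ pf i := by
      intro i
      simp only [hr]
      rw [div_le_iff₀ hs0]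
      refine le_trans (EpsMix.iidE_mono hpf0
        (G := fun z => ∑ j, (fun k => if k = i then (1 : ℝ) else 0) (z j)) fun z => ?_) ?_
      · rw [← Equiv.sum_comp (σ z) fun j => (fun k => if k = i then (1 : ℝ) else 0) (z j)]
        refine Finset.sum_le_sum fun j _ => ?_
        dsimp only
        split_ifs
        · simpa using hw1 j
        · simp
      · rw [EpsMix.iidE_sum, Finset.sum_congr rfl fun j _ => EpsMix.iidE_one hpf1
          (fun k => if k = i then (1 : ℝ) else 0) j]
        simp [mul_comm]
    have hr1 : ∑ i, r i = 1 - α := by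
      have h := hsumr (fun _ => 1)
      simp only [mul_one, hsumw] at h
      rw [h, EpsMix.iidE_const hpf1]
      field_simp
    have hb : ∀ i, |pε i - pf i| ≤ α * (if i = A then 1 else 0) + (pf i - r i) := by
      intro i
      have h0 : (0 : ℝ) ≤ α * (if i = A then 1 else 0) := by positivity
      have := hrle i
      rw [hpr, abs_le]
      constructor <;> linarith
    have := Finset.sum_le_sum fun i (_ : i ∈ Finset.univ) => hb i
    rw [Finset.sum_add_distrib, Finset.sum_sub_distrib, hpf1, hr1, ← Finset.mul_sum] at this
    simp only [Finset.sum_ite_eq', Finset.mem_univ, if_true] at this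
    linarith
  · intro q hq0 hq1 hTV
    obtain ⟨g, hg0, hg1, hga, hgq⟩ :=
      EpsMix.exists_selection hpf0 hpf1 hq0 hq1 (1 - α) ha (by linarith)
    have hE := EpsMix.expected_value_ge hpf0 hpf1 V hV (1 - α) ha (by linarith) ε hε0 hε1 hn σ hσ
      g hg0 hg1 hga
    simp only [← hw] at hE
    have hval : ∑ i, pε i * V i = α * V A + EpsMix.iidE pf (fun z : Fin s → S =>
        ∑ j, w j * V (z (σ z j))) / s := by
      rw [← hsumr]
      simp [hpr, add_mul, Finset.sum_add_distrib]
    set C := ∑ i, pf i * (g i * V i) with hC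
    have hC0 : 0 ≤ C :=
      Finset.sum_nonneg fun i _ => mul_nonneg (hpf0 i) (mul_nonneg (hg0 i) (hV i))
    rw [← le_div_iff₀ hs0] at hE
    -- The part of `q` outside the selection has mass `α` and value at most `V Opt`.
    have hqV : ∑ i, q i * V i ≤ α * V Opt + C := by
      have : ∑ i, q i * V i ≤ ∑ i, ((q i - pf i * g i) * V Opt + pf i * (g i * V i)) :=
        Finset.sum_le_sum fun i _ => by nlinarith [hgq i, hOpt i]
      rw [Finset.sum_add_distrib, ← Finset.sum_mul, Finset.sum_sub_distrib, hq1, hga] at this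
      linarith
    rw [hval]
    have hO := hV Opt
    have h1 : lam * (1 - ε) * (∑ i, q i * V i) ≤ lam * (1 - ε) * (α * V Opt + C) :=
      mul_le_mul_of_nonneg_left hqV (mul_nonneg hl0 (by linarith))
    have h2 : lam * ((1 - ε) * C) ≤ (1 - ε) * C :=
      mul_le_of_le_one_left (mul_nonneg (by linarith) hC0) hl1
    have h3 : 0 ≤ ε * (α * (lam * V Opt)) := by positivity
    have h4 := mul_le_mul_of_nonneg_left hA hα0.le
    nlinarith
end

section
/- Let S be a finite nonempty type, V : S → ℝ with V i ≥ 0 for all i, and Opt ∈ S with V(Opt) = max_{i∈S} V(i). Let α ∈ [0,1] and let p^f, p^α, p̃^α be distributions on S such that p^f i = (1−α)·p^α i + α·p̃^α i for all i and such that V(i) ≤ V(j) whenever p̃^α i > 0 and p^α j > 0. Define the distribution q* by q* i := α·𝟙[i = Opt] + (1−α)·p^α i. Then (a) TV(q*, p^f) ≤ α, (b) V(q*) = α·V(Opt) + (1−α)·V(p^α), and (c) for every distribution q on S with TV(q, p^f) ≤ α one has V(q) ≤ V(q*). -/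
/-!
Feasibility and the welfare formula are direct computations from the decomposition.

For optimality, let `t` be the largest value on the support of `pta`; it separates the two
supports: `V ≤ t` where `pta > 0` and `t ≤ V` where `pa > 0`. Compared with `pf`, a competitor `q`
adds mass `(q - pf)⁺` and removes mass `(pf - q)⁺`, both of total `TV(q, pf) ≤ α`. An added unit
gains at most `V Opt - t` relative to `t`, and removing mass gains at most
`∑ α * pta * (t - V)`, since below the threshold `pf = α * pta`. Summing the resulting pointwise
inequality bounds the gain by `α * (V Opt - V(pta))`, which is exactly the gain of `qs`.
-/

/-- A value separating the support of `pta` from that of `pa` and bounded by the maximum of `V`. -/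
lemma exists_threshold {S : Type*} [Fintype S] (V : S → ℝ) (M : ℝ) (hM : ∀ i, V i ≤ M)
    (pa pta : S → ℝ) (hpta0 : ∀ i, 0 ≤ pta i) (hpta1 : ∑ i, pta i = 1)
    (horder : ∀ i j, 0 < pta i → 0 < pa j → V i ≤ V j) :
    ∃ t, t ≤ M ∧ (∀ i, 0 < pta i → V i ≤ t) ∧ ∀ j, 0 < pa j → t ≤ V j := by
  classical
  have hne : (Finset.univ.filter fun i => 0 < pta i).Nonempty := by
    obtain ⟨i, _, hi⟩ := Finset.exists_ne_zero_of_sum_ne_zero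
      (s := Finset.univ) (f := pta) (by rw [hpta1]; exact one_ne_zero)
    exact ⟨i, by simpa using lt_of_le_of_ne (hpta0 i) hi.symm⟩
  obtain ⟨k, hk, hmax⟩ := Finset.exists_max_image _ V hne
  simp only [Finset.mem_filter, Finset.mem_univ, true_and] at hk hmax
  exact ⟨V k, hM k, hmax, fun j hj => horder k j hk hj⟩

/-- The paper's characterization (equations (5)-(6)) of the optimal solution of
the constrained problem `max V(p)` s.t. `TV(p, p^f) ≤ α`: moving the bottom
`α` mass of `p^f` onto `Opt` gives `q* i = α·𝟙[i = Opt] + (1-α)·p^α i`, which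
is `α`-fair, has welfare `α·V(Opt) + (1-α)·V(p^α)`, and dominates every
`α`-fair distribution in welfare. -/
theorem optimal_fair_distribution_characterization
    {S : Type*} [Fintype S] [DecidableEq S] [Nonempty S]
    (V : S → ℝ) (hV : ∀ i, 0 ≤ V i)
    (Opt : S) (hOpt : ∀ i, V i ≤ V Opt)
    (α : ℝ) (hα : α ∈ Set.Icc (0 : ℝ) 1)
    (pf pa pta : S → ℝ)
    (hpf0 : ∀ i, 0 ≤ pf i) (hpf1 : ∑ i, pf i = 1)
    (hpa0 : ∀ i, 0 ≤ pa i) (hpa1 : ∑ i, pa i = 1)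
    (hpta0 : ∀ i, 0 ≤ pta i) (hpta1 : ∑ i, pta i = 1)
    (hdecomp : ∀ i, pf i = (1 - α) * pa i + α * pta i)
    (horder : ∀ i j, 0 < pta i → 0 < pa j → V i ≤ V j)
    (qs : S → ℝ)
    (hqs : ∀ i, qs i = α * (if i = Opt then 1 else 0) + (1 - α) * pa i) :
    (1 / 2) * ∑ i, |qs i - pf i| ≤ α ∧
    (∑ i, qs i * V i) = α * V Opt + (1 - α) * ∑ i, pa i * V i ∧
    ∀ q : S → ℝ, (∀ i, 0 ≤ q i) → (∑ i, q i = 1) →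
      (1 / 2) * ∑ i, |q i - pf i| ≤ α →
      ∑ i, q i * V i ≤ ∑ i, qs i * V i := by
  obtain ⟨h0, h1⟩ := hα
  have hval : (∑ i, qs i * V i) = α * V Opt + (1 - α) * ∑ i, pa i * V i := by
    simp only [hqs, add_mul, Finset.sum_add_distrib, Finset.mul_sum]
    simp [mul_assoc]
  refine ⟨?_, hval, ?_⟩
  · have hle : ∀ i, |qs i - pf i| ≤ α * (if i = Opt then 1 else 0) + α * pta i := by
      intro i
      have hp := mul_nonneg h0 (hpta0 i)
      rw [hqs, hdecomp, abs_le]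
      split_ifs <;> constructor <;> linarith
    have hsum := Finset.sum_le_sum fun i (_ : i ∈ Finset.univ) => hle i
    rw [Finset.sum_add_distrib, ← Finset.mul_sum, ← Finset.mul_sum, hpta1] at hsum
    simp only [Finset.sum_ite_eq', Finset.mem_univ, if_true] at hsum
    linarith
  · intro q hq0 hq1 hTV
    obtain ⟨t, htM, htop, hbot⟩ := exists_threshold V (V Opt) hOpt pa pta hpta0 hpta1 horder
    -- `(|q - pf| + (q - pf)) / 2` is the positive part of `q - pf`, the mass added at `i`.
    have hpt : ∀ i, q i * V i ≤ (1 - α) * (pa i * V i) + t * (q i - pf i)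
        + (V Opt - t) * ((1 / 2) * |q i - pf i| + (1 / 2) * (q i - pf i)) + (α * t) * pta i := by
      intro i
      suffices h : (q i - pf i) * (V i - t) ≤
          (V Opt - t) * ((1 / 2) * |q i - pf i| + (1 / 2) * (q i - pf i))
            - α * pta i * (V i - t) by
        have hd : pf i * V i = (1 - α) * (pa i * V i) + α * pta i * V i := by
          rw [hdecomp]; ring
        linarith
      rcases le_or_gt t (V i) with hti | hti
      · have hneg : α * pta i * (V i - t) ≤ 0 := by
          rcases (hpta0 i).eq_or_lt with h | h
          · simp [← h]
          · exact mul_nonpos_of_nonneg_of_nonpos (mul_nonneg h0 h.le) (by linarith [htop i h])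
        rcases le_total 0 (q i - pf i) with hs | hs
        · rw [abs_of_nonneg hs]
          nlinarith [mul_nonneg hs (sub_nonneg.2 (hOpt i))]
        · rw [abs_of_nonpos hs]
          nlinarith [mul_nonneg (neg_nonneg.2 hs) (sub_nonneg.2 hti)]
      -- Below the threshold `pa` vanishes, so at most `pf i = α * pta i` can be removed.
      · have hpa : pa i = 0 := by
          by_contra h
          exact absurd (hbot i (lt_of_le_of_ne (hpa0 i) (Ne.symm h))) (not_le.2 hti)
        have hpfi : pf i = α * pta i := by rw [hdecomp, hpa]; ring
        rw [← hpfi]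
        have hu : 0 ≤ (1 / 2) * |q i - pf i| + (1 / 2) * (q i - pf i) := by
          linarith [neg_abs_le (q i - pf i)]
        nlinarith [mul_nonneg (sub_nonneg.2 htM) hu,
          mul_nonneg (hq0 i) (sub_nonneg.2 hti.le)]
    have hsum := Finset.sum_le_sum fun i (_ : i ∈ Finset.univ) => hpt i
    simp only [Finset.sum_add_distrib, ← Finset.mul_sum, Finset.sum_sub_distrib, hq1, hpf1,
      hpta1] at hsum
    rw [hval]
    nlinarith [mul_le_mul_of_nonneg_left hTV (sub_nonneg.2 htM)]
end

section
/- For every pmf p^f on a finite nonempty type S, every value function V : S → ℝ, and every α ∈ [0,1], there exist distributions p^α and p̃^α on S such that p^f i = (1−α)·p^α i + α·p̃^α i for all i ∈ S, and V(i) ≤ V(j) whenever p̃^α i > 0 and p^α j > 0. -/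
/-!
Mass `α` is removed greedily from `pf`, starting at the smallest values of `V`: this gives
`0 ≤ q ≤ pf` with total mass `α` such that every point where `q` is positive has value at most
that of every point where `pf - q` is positive (`exists_bottom_mass`). For `0 < α < 1` the two
parts are `(pf - q) / (1 - α)` and `q / α`. At `α = 0` and `α = 1` one part has weight zero, and
it is taken to be a point mass at a minimizer, respectively a maximizer, of `V`.
-/

/-- The greedy removal of mass `a` from `p` on `s`. In the induction the points of `s` are added
in increasing order of `V`: if the earlier points hold mass at least `a`, the new top point is left
untouched; otherwise the earlier points are removed entirely and the new one supplies the rest. -/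
lemma exists_bottom_mass {S : Type*} (p : S → ℝ) (hp : ∀ i, 0 ≤ p i) (V : S → ℝ) (s : Finset S) :
    ∀ a : ℝ, 0 ≤ a → a ≤ ∑ i ∈ s, p i →
      ∃ q : S → ℝ, (∀ i, 0 ≤ q i) ∧ (∀ i ∈ s, q i ≤ p i) ∧ ∑ i ∈ s, q i = a ∧
        ∀ i ∈ s, ∀ j ∈ s, 0 < q i → q j < p j → V i ≤ V j := by
  classical
  induction s using Finset.induction_on_max_value V with
  | empty =>
    intro a ha0 ha
    refine ⟨fun _ => 0, by simp, by simp, ?_, by simp⟩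
    simp at ha ⊢
    linarith
  | insert x s hx hmax ih =>
    intro a ha0 ha
    rw [Finset.sum_insert hx] at ha
    rcases le_total a (∑ i ∈ s, p i) with h | h
    · obtain ⟨q, hq0, hqp, hqs, hqV⟩ := ih a ha0 h
      refine ⟨Function.update q x 0, ?_, ?_, ?_, ?_⟩
      · intro i
        by_cases hi : i = x
        · subst hi; simp
        · simpa [hi] using hq0 i
      · intro i hi
        by_cases hix : i = x
        · subst hix; simpa using hp i
        · simpa [hix] using hqp i (Finset.mem_of_mem_insert_of_ne hi hix)
      · rw [Finset.sum_insert hx, Finset.sum_update_of_notMem hx, hqs]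
        simp
      · intro i hi j hj hqi hqj
        have hix : i ≠ x := by
          rintro rfl
          simp at hqi
        have his := Finset.mem_of_mem_insert_of_ne hi hix
        by_cases hjx : j = x
        · exact hjx ▸ hmax i his
        · exact hqV i his j (Finset.mem_of_mem_insert_of_ne hj hjx)
            (by simpa [hix] using hqi) (by simpa [hjx] using hqj)
    · refine ⟨Function.update p x (a - ∑ i ∈ s, p i), ?_, ?_, ?_, ?_⟩
      · intro i
        by_cases hi : i = x
        · subst hi; simpa using h
        · simpa [hi] using hp i
      · intro i _
        by_cases hix : i = x
        · subst hix; simp; linarith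
        · simp [hix]
      · rw [Finset.sum_insert hx, Finset.sum_update_of_notMem hx]
        simp
      · intro i hi j hj _ hqj
        have hjx : j = x := by
          by_contra hjx
          simp [hjx] at hqj
        subst hjx
        rcases Finset.mem_insert.mp hi with rfl | his
        · exact le_rfl
        · exact hmax i his

/-- Equation (7) of the paper: every distribution `p^f` on a finite nonempty
type decomposes as `p^f = (1-α)·p^α + α·p̃^α` into a top-(1-α) fraction `p^α`
and a bottom-α fraction `p̃^α` by welfare, i.e. every solution in the support
of `p̃^α` has value at most that of every solution in the support of `p^α`. -/
theorem fair_prior_top_bottom_decomposition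
    {S : Type*} [Fintype S] [Nonempty S]
    (pf : S → ℝ) (hpf0 : ∀ i, 0 ≤ pf i) (hpf1 : ∑ i, pf i = 1)
    (V : S → ℝ)
    (α : ℝ) (hα : α ∈ Set.Icc (0 : ℝ) 1) :
    ∃ pa pta : S → ℝ,
      (∀ i, 0 ≤ pa i) ∧ (∑ i, pa i = 1) ∧
      (∀ i, 0 ≤ pta i) ∧ (∑ i, pta i = 1) ∧
      (∀ i, pf i = (1 - α) * pa i + α * pta i) ∧
      (∀ i j, 0 < pta i → 0 < pa j → V i ≤ V j) := by
  classical
  obtain ⟨h0, h1⟩ := hα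
  have single_pos : ∀ m i : S, 0 < (Pi.single m 1 : S → ℝ) i → i = m := by
    intro m i h
    by_contra hne
    simp [hne] at h
  have single_nonneg : ∀ m i : S, 0 ≤ (Pi.single m 1 : S → ℝ) i := fun m i =>
    (Pi.single_nonneg.mpr zero_le_one : (0 : S → ℝ) ≤ Pi.single m 1) i
  rcases h0.eq_or_lt with rfl | h0
  · obtain ⟨m, hm⟩ := Finite.exists_min V
    refine ⟨pf, Pi.single m 1, hpf0, hpf1, single_nonneg m, by simp, by simp, ?_⟩
    intro i j hi _
    exact single_pos m i hi ▸ hm j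
  rcases h1.eq_or_lt with rfl | h1
  · obtain ⟨m, hm⟩ := Finite.exists_max V
    refine ⟨Pi.single m 1, pf, single_nonneg m, by simp, hpf0, hpf1, by simp, ?_⟩
    intro i j _ hj
    exact single_pos m j hj ▸ hm i
  obtain ⟨q, hq0, hqp, hqs, hqV⟩ :=
    exists_bottom_mass pf hpf0 V Finset.univ α h0.le (hpf1 ▸ h1.le)
  have h1' : 0 < 1 - α := sub_pos.mpr h1
  refine ⟨fun i => (pf i - q i) / (1 - α), fun i => q i / α, ?_, ?_, ?_, ?_, ?_, ?_⟩
  · exact fun i => div_nonneg (sub_nonneg.mpr (hqp i (Finset.mem_univ i))) h1'.le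
  · rw [← Finset.sum_div, Finset.sum_sub_distrib, hpf1, hqs, div_self h1'.ne']
  · exact fun i => div_nonneg (hq0 i) h0.le
  · rw [← Finset.sum_div, hqs, div_self h0.ne']
  · intro i
    rw [mul_div_cancel₀ _ h1'.ne', mul_div_cancel₀ _ h0.ne']
    ring
  · intro i j hi hj
    refine hqV i (Finset.mem_univ i) j (Finset.mem_univ j) ?_ ?_
    · exact (div_pos_iff_of_pos_right h0).mp hi
    · exact sub_pos.mp ((div_pos_iff_of_pos_right h1').mp hj)
end

section
/- Let S be a finite nonempty type, V : S → ℝ with V i ≥ 0 for all i, and Opt ∈ S with V(Opt) = max_{i∈S} V(i) and V(Opt) > 0. Let λ ∈ [0,1], α ∈ [0,1] with α ≤ 1−λ, and let p^f be a distribution on S with V(i) = 0 for every i with p^f i > 0. Let A ∈ S satisfy V(A) = λ·V(Opt), and define p^s i := α·𝟙[i = A] + (1−α)·p^f i. Then (a) V(p^s) = α·λ·V(Opt), (b) the distribution q* i := α·𝟙[i = Opt] + (1−α)·p^f i satisfies TV(q*, p^f) ≤ α and V(q*) = α·V(Opt), (c) every distribution q with TV(q, p^f) ≤ α satisfies V(q)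 ≤ α·V(Opt), and hence (d) V(p^s) = λ·max{V(q) : TV(q, p^f) ≤ α} = min(λ, αλ+(1−α)²)·max{V(q) : TV(q, p^f) ≤ α}. -/
/-!
Since `V` vanishes on the support of `pf`, mixing a point mass at `a` of weight `α` with `pf` has
welfare `α * V a`; this gives the values of `ps` and `qs`. For the upper bound, a distribution `q`
earns value only where `pf` vanishes, so `q i * V i` is at most `V Opt` times the positive part
of `q i - pf i`, and these positive parts sum to the total variation distance. Finally,
`lam ≤ 1 - α` gives `lam * (1 - α) ≤ (1 - α) ^ 2`, so the minimum in the last claim is `lam`.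
-/

lemma sum_mix_mul {S : Type*} [Fintype S] [DecidableEq S] (V pf p : S → ℝ) (α : ℝ) (a : S)
    (hz : ∀ i, pf i * V i = 0)
    (hp : ∀ i, p i = α * (if i = a then 1 else 0) + (1 - α) * pf i) :
    ∑ i, p i * V i = α * V a := by
  have h : ∀ i, p i * V i = if i = a then α * V i else 0 := by
    intro i
    rw [hp i]
    split_ifs <;> linear_combination (1 - α) * hz i
  simp [h]

/-- Tightness of the Simple-Mix welfare guarantee for `α ≤ 1-λ` (Section
"Welfare guarantees of Simple-Mix are tight"): if the fair prior is supported
on zero-value solutions and `V(A) = λ·V(Opt)`, then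
`p^s i = α·𝟙[i = A] + (1-α)·p^f i` has welfare exactly `α·λ·V(Opt)`, the
distribution `q* i = α·𝟙[i = Opt] + (1-α)·p^f i` is `α`-fair with welfare
`α·V(Opt)`, every `α`-fair distribution has welfare at most `α·V(Opt)`, and
hence `V(p^s) = λ·max{V(q) : TV(q,p^f) ≤ α}
             = min(λ, αλ + (1-α)²)·max{V(q) : TV(q,p^f) ≤ α}`. -/
theorem simple_mix_tightness_small_alpha
    {S : Type*} [Fintype S] [DecidableEq S] [Nonempty S]
    (V : S → ℝ) (hV : ∀ i, 0 ≤ V i)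
    (Opt : S) (hOpt : ∀ i, V i ≤ V Opt) (hOptpos : 0 < V Opt)
    (lam : ℝ) (hlam : lam ∈ Set.Icc (0 : ℝ) 1)
    (α : ℝ) (hα : α ∈ Set.Icc (0 : ℝ) 1) (hαlam : α ≤ 1 - lam)
    (pf : S → ℝ) (hpf0 : ∀ i, 0 ≤ pf i) (hpf1 : ∑ i, pf i = 1)
    (hpfzero : ∀ i, 0 < pf i → V i = 0)
    (A : S) (hA : V A = lam * V Opt)
    (ps : S → ℝ)
    (hps : ∀ i, ps i = α * (if i = A then 1 else 0) + (1 - α) * pf i)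
    (qs : S → ℝ)
    (hqs : ∀ i, qs i = α * (if i = Opt then 1 else 0) + (1 - α) * pf i) :
    (∑ i, ps i * V i = α * lam * V Opt) ∧
    ((1 / 2) * ∑ i, |qs i - pf i| ≤ α ∧ ∑ i, qs i * V i = α * V Opt) ∧
    (∀ q : S → ℝ, (∀ i, 0 ≤ q i) → (∑ i, q i = 1) →
      (1 / 2) * ∑ i, |q i - pf i| ≤ α → ∑ i, q i * V i ≤ α * V Opt) ∧
    ∃ m : ℝ, IsGreatest {v : ℝ | ∃ q : S → ℝ, (∀ i, 0 ≤ q i) ∧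
        (∑ i, q i = 1) ∧ (1 / 2) * ∑ i, |q i - pf i| ≤ α ∧
        v = ∑ i, q i * V i} m ∧
      ∑ i, ps i * V i = lam * m ∧
      ∑ i, ps i * V i = min lam (α * lam + (1 - α) ^ 2) * m := by
  obtain ⟨hl0, hl1⟩ := hlam
  obtain ⟨ha0, ha1⟩ := hα
  have hz : ∀ i, pf i * V i = 0 := by
    intro i
    rcases (hpf0 i).eq_or_lt with h | h
    · simp [← h]
    · simp [hpfzero i h]
  have hVps : ∑ i, ps i * V i = α * lam * V Opt := by
    rw [sum_mix_mul V pf ps α A hz hps, hA]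
    ring
  have hVqs : ∑ i, qs i * V i = α * V Opt := sum_mix_mul V pf qs α Opt hz hqs
  have hqs0 : ∀ i, 0 ≤ qs i := by
    intro i
    have h := mul_nonneg (sub_nonneg.2 ha1) (hpf0 i)
    rw [hqs i]
    split_ifs <;> linarith
  have hqs1 : ∑ i, qs i = 1 := by
    simp [hqs, Finset.sum_add_distrib, ← Finset.mul_sum, hpf1]
  have hTV : (1 / 2) * ∑ i, |qs i - pf i| ≤ α := by
    -- `qs - pf = α * (𝟙[· = Opt] - pf)`, and two distributions have `ℓ¹` distance at most `2`.
    have h : ∀ i, |qs i - pf i| ≤ α * ((if i = Opt then 1 else 0) + pf i) := by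
      intro i
      have h0 := mul_nonneg ha0 (hpf0 i)
      rw [hqs i, abs_le]
      split_ifs <;> constructor <;> linarith
    have h2 := Finset.sum_le_sum fun i (_ : i ∈ Finset.univ) => h i
    rw [← Finset.mul_sum, Finset.sum_add_distrib, hpf1] at h2
    simp only [Finset.sum_ite_eq', Finset.mem_univ, if_true] at h2
    linarith
  have hub : ∀ q : S → ℝ, (∀ i, 0 ≤ q i) → (∑ i, q i = 1) →
      (1 / 2) * ∑ i, |q i - pf i| ≤ α → ∑ i, q i * V i ≤ α * V Opt := by
    intro q hq0 hq1 hq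
    -- `(|x| + x) / 2` is the positive part of `x`.
    have h : ∀ i, q i * V i ≤ (|q i - pf i| + (q i - pf i)) / 2 * V Opt := by
      intro i
      rcases (hpf0 i).eq_or_lt with h | h
      · rw [← h, sub_zero, abs_of_nonneg (hq0 i), add_self_div_two]
        exact mul_le_mul_of_nonneg_left (hOpt i) (hq0 i)
      · rw [hpfzero i h, mul_zero]
        have := neg_abs_le (q i - pf i)
        exact mul_nonneg (by linarith) hOptpos.le
    refine (Finset.sum_le_sum fun i _ => h i).trans ?_
    rw [← Finset.sum_mul, ← Finset.sum_div, Finset.sum_add_distrib, Finset.sum_sub_distrib,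
      hq1, hpf1]
    exact mul_le_mul_of_nonneg_right (by linarith) hOptpos.le
  have hmin : min lam (α * lam + (1 - α) ^ 2) = lam := by
    apply min_eq_left
    nlinarith [mul_nonneg (sub_nonneg.2 ha1) (sub_nonneg.2 hαlam)]
  refine ⟨hVps, ⟨hTV, hVqs⟩, hub, α * V Opt, ⟨⟨qs, hqs0, hqs1, hTV, hVqs.symm⟩, ?_⟩, ?_, ?_⟩
  · rintro v ⟨q, hq0, hq1, hq, rfl⟩
    exact hub q hq0 hq1 hq
  · rw [hVps]
    ring
  · rw [hVps, hmin]
    ring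
end

section
/- Let S be a finite nonempty type, V : S → ℝ with V i ≥ 0 for all i, and Opt ∈ S with V(Opt) = max_{i∈S} V(i). Let λ ∈ [0,1], A ∈ S with V(A) ≥ λ·V(Opt), α ∈ [0,1], and let p^f be a distribution on S satisfying V(p^f) ≥ (1−α)·V(Opt). Define p^s i := α·𝟙[i = A] + (1−α)·p^f i. Then for every distribution q on S with TV(q, p^f) ≤ α, V(p^s) ≥ (α·λ + (1−α)²)·V(q). -/
/-!
The welfare of a distribution is an average of `V`, hence at most `V Opt`; so it suffices to
compare `ps` with `V Opt`. By linearity the welfare of `ps` is `α * V A` plus `1 - α` times the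
welfare of `pf`, and these terms are at least `α * lam * V Opt` and `(1 - α) ^ 2 * V Opt`.
-/

/-- First case in the proof of Theorem 2 (Simple-Mix): if the fair prior
already has welfare `V(p^f) ≥ (1-α)·V(Opt)`, then the output distribution
`p^s i = α·𝟙[i = A] + (1-α)·p^f i` has welfare at least `(α·λ + (1-α)²)`
times the welfare of any `α`-fair distribution `q`. -/
theorem simple_mix_welfare_case_rich_prior
    {S : Type*} [Fintype S] [DecidableEq S] [Nonempty S]
    (V : S → ℝ) (hV : ∀ i, 0 ≤ V i)
    (Opt : S) (hOpt : ∀ i, V i ≤ V Opt)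
    (lam : ℝ) (hlam : lam ∈ Set.Icc (0 : ℝ) 1)
    (A : S) (hA : lam * V Opt ≤ V A)
    (α : ℝ) (hα : α ∈ Set.Icc (0 : ℝ) 1)
    (pf : S → ℝ) (hpf0 : ∀ i, 0 ≤ pf i) (hpf1 : ∑ i, pf i = 1)
    (hpfwelfare : (1 - α) * V Opt ≤ ∑ i, pf i * V i)
    (ps : S → ℝ)
    (hps : ∀ i, ps i = α * (if i = A then 1 else 0) + (1 - α) * pf i) :
    ∀ q : S → ℝ, (∀ i, 0 ≤ q i) → (∑ i, q i = 1) →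
      (1 / 2) * ∑ i, |q i - pf i| ≤ α →
      (α * lam + (1 - α) ^ 2) * (∑ i, q i * V i) ≤ ∑ i, ps i * V i := by
  intro q hq0 hq1 _
  obtain ⟨hα0, hα1⟩ := hα
  have hqle : ∑ i, q i * V i ≤ V Opt := by
    calc ∑ i, q i * V i ≤ ∑ i, q i * V Opt :=
          Finset.sum_le_sum fun i _ => mul_le_mul_of_nonneg_left (hOpt i) (hq0 i)
      _ = V Opt := by rw [← Finset.sum_mul, hq1, one_mul]
  have hpsV : ∑ i, ps i * V i = α * V A + (1 - α) * ∑ i, pf i * V i := by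
    simp [hps, add_mul, Finset.sum_add_distrib, Finset.mul_sum, mul_assoc]
  have hcoef : 0 ≤ α * lam + (1 - α) ^ 2 :=
    add_nonneg (mul_nonneg hα0 hlam.1) (sq_nonneg _)
  calc (α * lam + (1 - α) ^ 2) * ∑ i, q i * V i
      ≤ (α * lam + (1 - α) ^ 2) * V Opt := mul_le_mul_of_nonneg_left hqle hcoef
    _ = α * (lam * V Opt) + (1 - α) * ((1 - α) * V Opt) := by ring
    _ ≤ α * V A + (1 - α) * ∑ i, pf i * V i :=
        add_le_add (mul_le_mul_of_nonneg_left hA hα0)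
          (mul_le_mul_of_nonneg_left hpfwelfare (sub_nonneg.2 hα1))
    _ = ∑ i, ps i * V i := hpsV.symm
end
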